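/- arXiv:1705.09957 — 7 statements merged into one kernel-verified Lean document; each statement's English description precedes it below -/
import Mathlib

section
/- Let a ≥ 2 and n be integers with 2a − 2 < n, and let σ be a uniformly random permutation of {1,…,n}. Then for every integer t, the probability that D_{a,a−2}(σ) ≡ t (mod n) is at most 1/(n−1); equivalently, the number of permutations σ of {1,…,n} with D_{a,a−2}(σ) ≡ t (mod n) is at most n!/(n−1). -/
/-!
Write `X = D_{a,a-2}(σ)`. Adding `1` cyclically to all values of `σ` changes `X` by
`a - (a - 2) = 2` modulo `n`, so the number `N(t)` of permutations with `X ≡ t (mod n)` is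
invariant under `t ↦ t + 2` (`count_shift`).

If `n` is odd, the residues `t + 2c` with `c < n` are distinct, so `n * N(t) ≤ n!`.

If `n = 2m`, the residues `t + 2c` with `c < m` are distinct and have the parity of `t`, so
`m * N(t)` is at most the number of `σ` with `X ≡ t (mod 2)`. Modulo `2`, `X` is the sum of the
first `k = 2a - 2` values of `σ`, so that number is `(n! ± S(k)) / 2`, where
`S(T) = ∑_σ ∏_{i ∈ T} (-1)^(σ(i)+1)` depends only on `|T|`. As the signs `(-1)^(x+1)`, `x < n`,
add up to zero, expanding `∑_σ (∑_i (-1)^(σ(i)+1)) ∏_{j ∈ T} (-1)^(σ(j)+1) = 0` gives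
`(n - l) S(l + 1) + l S(l - 1) = 0` (`signSum_rec`). Starting from `|S(0)|, |S(n)| ≤ n!` and moving
inwards from both ends, this yields `(n - 1) |S(k)| ≤ n!` for even `0 < k < n`
(`signSum_bound`), and so `N(t) ≤ n! / (n - 1)`.
-/

/-- `D n a b σ = (σ(1)+⋯+σ(a)) − (σ(a+1)+⋯+σ(a+b))` for a permutation `σ` of `{1,…,n}`,
modelled as a permutation of `Fin n` with values `σ i + 1 ∈ {1,…,n}`. -/
def D (n a b : ℕ) (σ : Equiv.Perm (Fin n)) : ℤ :=
  (∑ i ∈ Finset.univ.filter (fun i : Fin n => (i : ℕ) < a), ((σ i : ℕ) + 1 : ℤ))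
    - ∑ i ∈ Finset.univ.filter (fun i : Fin n => a ≤ (i : ℕ) ∧ (i : ℕ) < a + b),
        ((σ i : ℕ) + 1 : ℤ)

open Finset

/-- The number of permutations with `D_{a,b} ≡ t (mod n)`. -/
def residueCount (n a b : ℕ) (t : ℤ) : ℕ :=
  (univ.filter (fun σ : Equiv.Perm (Fin n) => D n a b σ ≡ t [ZMOD (n : ℤ)])).card

/-- The sum over all permutations of the product of the signs `(-1)^(σ(i)+1)` over `i ∈ T`. -/
def signSum (n : ℕ) (T : Finset (Fin n)) : ℤ :=
  ∑ σ : Equiv.Perm (Fin n), ∏ i ∈ T, (-1 : ℤ) ^ ((σ i : ℕ) + 1)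

lemma card_val_lt (n k : ℕ) (hk : k ≤ n) :
    (univ.filter (fun i : Fin n => (i : ℕ) < k)).card = k := by
  rw [Fin.card_filter_val_lt, min_eq_right hk]

lemma card_val_Ico (n a b : ℕ) (h : a + b ≤ n) :
    (univ.filter (fun i : Fin n => a ≤ (i : ℕ) ∧ (i : ℕ) < a + b)).card = b := by
  have h1 : (univ.filter (fun i : Fin n => (i : ℕ) < a + b)).card = a + b := card_val_lt _ _ h
  have h2 : (univ.filter (fun i : Fin n => (i : ℕ) < a)).card = a := card_val_lt _ _ (by omega)
  have h3 : univ.filter (fun i : Fin n => (i : ℕ) < a + b)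
      = univ.filter (fun i : Fin n => (i : ℕ) < a) ∪
        univ.filter (fun i : Fin n => a ≤ (i : ℕ) ∧ (i : ℕ) < a + b) := by
    ext i; simp; omega
  rw [h3, card_union_of_disjoint, h2] at h1
  · omega
  · rw [disjoint_left]; intro i; simp; omega

/-! ### Cyclic shifts of the values -/

lemma D_shift (n a b : ℕ) [NeZero n] (h : a + b ≤ n) (σ : Equiv.Perm (Fin n)) :
    D n a b (σ.trans (Equiv.addRight 1)) ≡ D n a b σ + (a - b) [ZMOD (n : ℤ)] := by
  rw [← ZMod.intCast_eq_intCast_iff]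
  have key : ∀ x : Fin n, (((x + 1 : Fin n) : ℕ) : ZMod n) = ((x : ℕ) : ZMod n) + 1 := by
    intro x
    rw [Fin.val_add, ZMod.natCast_mod]
    push_cast
    rw [Fin.val_one', ZMod.natCast_mod]
    simp
  have c1 := card_val_lt n a (by omega)
  have c2 := card_val_Ico n a b h
  simp only [D]
  push_cast
  simp only [Equiv.trans_apply, Equiv.coe_addRight, key]
  simp only [sum_add_distrib, sum_const, c1, c2, nsmul_eq_mul, mul_one]
  ring

lemma count_shift (n a b : ℕ) [NeZero n] (h : a + b ≤ n) (hab : a = b + 2) (t : ℤ) :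
    residueCount n a b (t + 2) = residueCount n a b t := by
  symm
  unfold residueCount
  refine card_equiv (Equiv.mulLeft (Equiv.addRight (1 : Fin n))) ?_
  intro σ
  simp only [mem_filter, mem_univ, true_and]
  have h1 := D_shift n a b h σ
  have h2 : (Equiv.mulLeft (Equiv.addRight (1 : Fin n))) σ = σ.trans (Equiv.addRight 1) := rfl
  have h3 : (a : ℤ) - b = 2 := by subst hab; push_cast; ring
  rw [h2]
  rw [h3] at h1
  constructor
  · intro h4
    exact h1.trans (h4.add_right 2)
  · intro h4
    exact Int.ModEq.add_right_cancel' 2 (h1.symm.trans h4)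

lemma count_shift_mul (n a b : ℕ) [NeZero n] (h : a + b ≤ n) (hab : a = b + 2) (t : ℤ) (c : ℕ) :
    residueCount n a b (t + 2 * c) = residueCount n a b t := by
  induction c with
  | zero => simp
  | succ c ih =>
    rw [← ih, ← count_shift n a b h hab (t + 2 * c)]
    push_cast
    ring_nf

/-- If the residues `2c`, `c < M`, are distinct modulo `n`, and `P` holds whenever `D_{a,b}` is
congruent to some `t + 2c`, then `M` disjoint residue classes of equal size fit into `P`. -/
lemma mul_count_le (n a b : ℕ) [NeZero n] (h : a + b ≤ n) (hab : a = b + 2) (t : ℤ) (M : ℕ)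
    (hM : ∀ c < M, ∀ d < M, (2 * c : ℤ) ≡ 2 * d [ZMOD (n : ℤ)] → c = d)
    (P : Equiv.Perm (Fin n) → Prop) [DecidablePred P]
    (hP : ∀ σ, ∀ c : ℕ, D n a b σ ≡ t + 2 * c [ZMOD (n : ℤ)] → P σ) :
    M * residueCount n a b t ≤ (univ.filter P).card := by
  have h1 : ((range M).biUnion (fun c : ℕ => univ.filter (fun σ : Equiv.Perm (Fin n) =>
      D n a b σ ≡ t + 2 * c [ZMOD (n : ℤ)]))).card = M * residueCount n a b t := by
    rw [card_biUnion]
    · refine (sum_congr rfl (fun c _ => count_shift_mul n a b h hab t c)).trans ?_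
      simp
    · intro c hc d hd hcd
      refine disjoint_left.2 ?_
      intro σ h2 h3
      simp only [mem_filter, mem_univ, true_and] at h2 h3
      exact hcd (hM c (by simpa using hc) d (by simpa using hd)
        (Int.ModEq.add_left_cancel' t (h2.symm.trans h3)))
  rw [← h1]
  refine card_le_card ?_
  intro σ hσ
  simp only [mem_biUnion, mem_filter, mem_univ, true_and] at hσ ⊢
  obtain ⟨c, -, hc⟩ := hσ
  exact hP σ c hc

/-! ### Sign sums -/

lemma signSum_card_eq (n : ℕ) {T U : Finset (Fin n)} (h : T.card = U.card) :
    signSum n T = signSum n U := by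
  obtain ⟨e⟩ : Nonempty (T ≃ U) := ⟨Finset.equivOfCardEq h⟩
  let π : Equiv.Perm (Fin n) := Equiv.extendSubtype e
  have hU : U = T.map π.toEmbedding := by
    symm
    refine eq_of_subset_of_card_le ?_ (by simp [h])
    intro x hx
    obtain ⟨y, hy, rfl⟩ := mem_map.1 hx
    exact Equiv.extendSubtype_mem e y hy
  unfold signSum
  rw [hU]
  symm
  refine Fintype.sum_equiv (Equiv.mulRight π) _ _ ?_
  intro σ
  simp

lemma signSum_abs_le (n : ℕ) (T : Finset (Fin n)) : |signSum n T| ≤ n.factorial := by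
  unfold signSum
  refine (abs_sum_le_sum_abs _ _).trans ?_
  simp [abs_prod, Fintype.card_perm]

lemma sum_signs (m : ℕ) (σ : Equiv.Perm (Fin (2 * m))) :
    ∑ i, (-1 : ℤ) ^ ((σ i : ℕ) + 1) = 0 := by
  rw [Equiv.sum_comp σ (fun x => (-1 : ℤ) ^ ((x : ℕ) + 1)),
    Fin.sum_univ_eq_sum_range (fun x => (-1 : ℤ) ^ (x + 1))]
  clear σ
  induction m with
  | zero => simp
  | succ m ih =>
    rw [show 2 * (m + 1) = 2 * m + 1 + 1 by ring, sum_range_succ, sum_range_succ, ih]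
    ring

/-- The sign sum over the first `k` positions. -/
def signSumInit (n k : ℕ) : ℤ := signSum n (univ.filter (fun i : Fin n => (i : ℕ) < k))

lemma signSum_eq_init (n k : ℕ) (hk : k ≤ n) (T : Finset (Fin n)) (hT : T.card = k) :
    signSum n T = signSumInit n k :=
  signSum_card_eq n (by rw [hT, card_val_lt n k hk])

/-- Multiplying the product over `l + 1` positions by the vanishing sum of all signs: a position
outside `T` enlarges the product, and one inside `T` cancels a factor. -/
lemma signSum_rec (m l : ℕ) (hl : l + 1 < 2 * m) :
    ((2 * m : ℤ) - (l + 1)) * signSumInit (2 * m) (l + 2) + (l + 1) * signSumInit (2 * m) l = 0 := by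
  set T : Finset (Fin (2 * m)) := univ.filter (fun i => (i : ℕ) < l + 1) with hTdef
  have hT : T.card = l + 1 := card_val_lt _ _ (by omega)
  have h0 : ∑ i, ∑ σ : Equiv.Perm (Fin (2 * m)), (-1 : ℤ) ^ ((σ i : ℕ) + 1) *
      ∏ j ∈ T, (-1 : ℤ) ^ ((σ j : ℕ) + 1) = 0 := by
    rw [sum_comm]
    refine sum_eq_zero fun σ _ => ?_
    rw [← sum_mul, sum_signs, zero_mul]
  rw [← sum_add_sum_compl T] at h0
  have h1 : ∀ i ∈ T, ∑ σ : Equiv.Perm (Fin (2 * m)), (-1 : ℤ) ^ ((σ i : ℕ) + 1) *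
      ∏ j ∈ T, (-1 : ℤ) ^ ((σ j : ℕ) + 1) = signSumInit (2 * m) l := by
    intro i hi
    rw [← signSum_eq_init (2 * m) l (by omega) (T.erase i) (by rw [card_erase_of_mem hi, hT]; rfl)]
    refine sum_congr rfl fun σ _ => ?_
    rw [← mul_prod_erase T _ hi, ← mul_assoc, ← mul_pow]
    simp
  have h2 : ∀ i ∈ Tᶜ, ∑ σ : Equiv.Perm (Fin (2 * m)), (-1 : ℤ) ^ ((σ i : ℕ) + 1) *
      ∏ j ∈ T, (-1 : ℤ) ^ ((σ j : ℕ) + 1) = signSumInit (2 * m) (l + 2) := by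
    intro i hi
    have hi' : i ∉ T := by simpa using hi
    rw [← signSum_eq_init (2 * m) (l + 2) (by omega) (insert i T)
      (by rw [card_insert_of_notMem hi', hT])]
    refine sum_congr rfl fun σ _ => ?_
    rw [prod_insert hi']
  rw [sum_congr rfl h1, sum_congr rfl h2, sum_const, sum_const, card_compl, hT, Fintype.card_fin,
    nsmul_eq_mul, nsmul_eq_mul, Nat.cast_sub (by omega)] at h0
  push_cast at h0
  linarith

/-- The recursion makes `g` decrease up to the middle of `[0, m]`, so there `g` is bounded by its
value at `1`, which is `g 0 / (2 * m - 1)`. -/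
lemma rec_bound (m : ℕ) (N : ℤ) (g : ℕ → ℤ) (h0 : g 0 ≤ N) (hg : ∀ j, 0 ≤ g j)
    (hrec : ∀ j < m, ((2 * m : ℤ) - 2 * j - 1) * g (j + 1) = (2 * j + 1) * g j)
    (j : ℕ) (hj : 2 * (j + 1) ≤ m + 1) : (2 * m - 1) * g (j + 1) ≤ N := by
  induction j with
  | zero =>
    have := hrec 0 (by omega)
    simp at this ⊢
    linarith
  | succ j ih =>
    have ih := ih (by omega)
    have h1 := hrec (j + 1) (by omega)
    push_cast at h1
    have h2 : g (j + 1 + 1) ≤ g (j + 1) := by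
      have hle : (2 * ((j : ℤ) + 1) + 1) ≤ (2 * m : ℤ) - 2 * (j + 1) - 1 := by
        zify at hj; linarith
      have hpos : (0 : ℤ) < (2 * m : ℤ) - 2 * (j + 1) - 1 := by linarith
      refine le_of_mul_le_mul_left ?_ hpos
      rw [h1]
      exact mul_le_mul_of_nonneg_right hle (hg _)
    have hm : (0 : ℤ) ≤ 2 * m - 1 := by omega
    exact (mul_le_mul_of_nonneg_left h2 hm).trans ih

lemma signSum_bound (m j : ℕ) (h1 : 0 < j) (h2 : j < m) :
    (2 * m - 1) * |signSumInit (2 * m) (2 * j)| ≤ ((2 * m).factorial : ℤ) := by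
  set g : ℕ → ℤ := fun j => |signSumInit (2 * m) (2 * j)| with hgdef
  have hN : ∀ j, g j ≤ ((2 * m).factorial : ℤ) := fun j => signSum_abs_le _ _
  have hg : ∀ j, 0 ≤ g j := fun j => abs_nonneg _
  have hrec : ∀ j < m, ((2 * m : ℤ) - 2 * j - 1) * g (j + 1) = (2 * j + 1) * g j := by
    intro j hj
    have h := signSum_rec m (2 * j) (by omega)
    push_cast at h
    have e1 : (0 : ℤ) ≤ (2 * m : ℤ) - 2 * j - 1 := by omega
    have e2 : (0 : ℤ) ≤ 2 * j + 1 := by omega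
    simp only [hgdef]
    have h' : ((2 * m : ℤ) - 2 * j - 1) * signSumInit (2 * m) (2 * (j + 1))
        = -((2 * j + 1) * signSumInit (2 * m) (2 * j)) := by
      rw [show 2 * (j + 1) = 2 * j + 2 by ring]
      linarith
    have h'' := congrArg abs h'
    rwa [abs_neg, abs_mul, abs_mul, abs_of_nonneg e1, abs_of_nonneg e2] at h''
  change (2 * m - 1) * g j ≤ _
  rcases le_or_gt (2 * j) (m + 1) with hj | hj
  · obtain ⟨i, rfl⟩ : ∃ i, j = i + 1 := ⟨j - 1, by omega⟩
    exact rec_bound m _ g (hN 0) hg hrec i hj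
  -- The recursion is invariant under `j ↦ m - j`.
  · obtain ⟨i, rfl⟩ : ∃ i, j = m - (i + 1) := ⟨m - j - 1, by omega⟩
    refine rec_bound m _ (fun j => g (m - j)) (hN _) (fun _ => hg _) ?_ i (by omega)
    intro l hl
    have h := hrec (m - (l + 1)) (by omega)
    rw [show m - (l + 1) + 1 = m - l by omega, Nat.cast_sub (by omega)] at h
    push_cast at h
    linarith

/-! ### Parity of `D` and the conclusion -/

lemma D_parity (n a b : ℕ) (σ : Equiv.Perm (Fin n)) :
    D n a b σ ≡ ((∑ i ∈ univ.filter (fun i : Fin n => (i : ℕ) < a + b), ((σ i : ℕ) + 1) : ℕ) : ℤ)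
      [ZMOD 2] := by
  have h3 : univ.filter (fun i : Fin n => (i : ℕ) < a + b)
      = univ.filter (fun i : Fin n => (i : ℕ) < a) ∪
        univ.filter (fun i : Fin n => a ≤ (i : ℕ) ∧ (i : ℕ) < a + b) := by
    ext i; simp; omega
  rw [h3, sum_union (by rw [disjoint_left]; intro i; simp; omega)]
  unfold D
  push_cast
  rw [Int.modEq_iff_dvd]
  refine ⟨∑ i ∈ univ.filter (fun i : Fin n => a ≤ (i : ℕ) ∧ (i : ℕ) < a + b),
        ((σ i : ℕ) + 1 : ℤ), ?_⟩
  ring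

lemma parity_count (n a b : ℕ) (t : ℤ) :
    2 * ((univ.filter (fun σ : Equiv.Perm (Fin n) => D n a b σ ≡ t [ZMOD 2])).card : ℤ)
      ≤ n.factorial + |signSumInit n (a + b)| := by
  set T := univ.filter (fun i : Fin n => (i : ℕ) < a + b) with hT
  obtain ⟨ε, hε, hεabs⟩ : ∃ ε : ℤ, (∀ s : ℕ, (if (s : ℤ) ≡ t [ZMOD 2] then 2 else 0 : ℤ)
      = 1 + ε * (-1) ^ s) ∧ |ε| = 1 := by
    rcases Int.even_or_odd t with ht | ht
    · refine ⟨1, fun s => ?_, by simp⟩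
      rcases Nat.even_or_odd s with hs | hs
      · rw [if_pos, hs.neg_one_pow]
        · norm_num
        · obtain ⟨x, rfl⟩ := ht; obtain ⟨y, rfl⟩ := hs
          rw [Int.ModEq]; omega
      · rw [if_neg, hs.neg_one_pow]
        · norm_num
        · obtain ⟨x, rfl⟩ := ht; obtain ⟨y, rfl⟩ := hs
          rw [Int.ModEq]; omega
    · refine ⟨-1, fun s => ?_, by simp⟩
      rcases Nat.even_or_odd s with hs | hs
      · rw [if_neg, hs.neg_one_pow]
        · norm_num
        · obtain ⟨x, rfl⟩ := ht; obtain ⟨y, rfl⟩ := hs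
          rw [Int.ModEq]; omega
      · rw [if_pos, hs.neg_one_pow]
        · norm_num
        · obtain ⟨x, rfl⟩ := ht; obtain ⟨y, rfl⟩ := hs
          rw [Int.ModEq]; omega
  have h1 : 2 * ((univ.filter (fun σ : Equiv.Perm (Fin n) => D n a b σ ≡ t [ZMOD 2])).card : ℤ)
      = n.factorial + ε * signSumInit n (a + b) := by
    have h2 : ∀ σ : Equiv.Perm (Fin n), (if D n a b σ ≡ t [ZMOD 2] then 2 else 0 : ℤ)
        = 1 + ε * ∏ i ∈ T, (-1) ^ ((σ i : ℕ) + 1) := by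
      intro σ
      rw [prod_pow_eq_pow_sum, ← hε]
      have := D_parity n a b σ
      refine if_congr ⟨fun h => this.symm.trans h, fun h => this.trans h⟩ rfl rfl
    have h3 := Finset.sum_congr (rfl : (univ : Finset (Equiv.Perm (Fin n))) = univ)
      (fun σ _ => h2 σ)
    rw [sum_add_distrib, ← mul_sum, ← sum_filter, sum_const, sum_const] at h3
    simp only [card_univ, Fintype.card_perm, Fintype.card_fin, nsmul_eq_mul, mul_one] at h3
    rw [mul_comm, h3]
    rfl
  rw [h1]
  have h4 := le_abs_self (ε * signSumInit n (a + b))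
  rw [abs_mul, hεabs, one_mul] at h4
  linarith

/-- For `a ≥ 2` and `2a − 2 < n`, a uniformly random permutation `σ` of `{1,…,n}`
satisfies `D_{a,a−2}(σ) ≡ t (mod n)` with probability at most `1/(n−1)`, for every `t`. -/
theorem prob_D_difftwo_mod (a n : ℕ) (ha : 2 ≤ a) (hn : 2 * a - 2 < n) (t : ℤ) :
    ((Finset.univ.filter
        (fun σ : Equiv.Perm (Fin n) => D n a (a - 2) σ ≡ t [ZMOD (n : ℤ)])).card : ℚ)
      / (Nat.factorial n : ℚ) ≤ 1 / ((n : ℚ) - 1) := by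
  have : NeZero n := ⟨by omega⟩
  obtain ⟨b, rfl⟩ : ∃ b, a = b + 2 := ⟨a - 2, by omega⟩
  rw [show b + 2 - 2 = b by omega]
  change (residueCount n (b + 2) b t : ℚ) / _ ≤ _
  have hf : (0 : ℚ) < n.factorial := by exact_mod_cast Nat.factorial_pos n
  have hn3 : (3 : ℚ) ≤ n := by exact_mod_cast (show 3 ≤ n by omega)
  have hn1 : (0 : ℚ) < n - 1 := by linarith
  rw [div_le_div_iff₀ hf hn1, one_mul]
  rcases Nat.even_or_odd' n with ⟨m, rfl | hodd⟩
  · have h1 := mul_count_le (2 * m) (b + 2) b (by omega) rfl t m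
      (by
        intro c hc d hd hcd
        push_cast at hcd
        have := Int.ModEq.mul_left_cancel' (by norm_num) hcd
        exact Nat.ModEq.eq_of_lt_of_lt (Int.natCast_modEq_iff.1 this) hc hd)
      (fun σ => D (2 * m) (b + 2) b σ ≡ t [ZMOD 2])
      (by
        intro σ c hc
        have h2 := hc.of_dvd (show (2 : ℤ) ∣ ((2 * m : ℕ) : ℤ) by push_cast; exact ⟨m, rfl⟩)
        exact h2.trans (by simp [Int.ModEq]))
    have h2 := parity_count (2 * m) (b + 2) b t
    have h3 := signSum_bound m (b + 1) (by omega) (by omega)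
    rw [show b + 2 + b = 2 * (b + 1) by ring] at h2
    zify at h1
    have hm : (0 : ℤ) < 2 * m := by omega
    have hm' : (0 : ℤ) ≤ 2 * m - 1 := by omega
    have h4 : (residueCount (2 * m) (b + 2) b t : ℤ) * (2 * m - 1) ≤ (2 * m).factorial := by
      refine le_of_mul_le_mul_left ?_ hm
      have h5 : (2 * m : ℤ) * residueCount (2 * m) (b + 2) b t
          ≤ (2 * m).factorial + |signSumInit (2 * m) (2 * (b + 1))| := by linarith
      have h6 := mul_le_mul_of_nonneg_left h5 hm'
      linarith
    have h5 : ((residueCount (2 * m) (b + 2) b t : ℤ) * (2 * m - 1) : ℚ) ≤ (2 * m).factorial := by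
      exact_mod_cast h4
    push_cast at h5 ⊢
    exact h5
  · have h1 := mul_count_le n (b + 2) b (by omega) rfl t n
      (by
        intro c hc d hd hcd
        have hcd' : 2 * c ≡ 2 * d [MOD n] := Int.natCast_modEq_iff.1 (by exact_mod_cast hcd)
        have := Nat.ModEq.cancel_left_of_coprime
          (Nat.coprime_two_right.2 ⟨m, hodd⟩ : Nat.gcd n 2 = 1) hcd'
        exact Nat.ModEq.eq_of_lt_of_lt this hc hd)
      (fun _ => True) (fun _ _ _ => trivial)
    simp only [filter_true, card_univ, Fintype.card_perm, Fintype.card_fin] at h1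
    have h2 : (n : ℚ) * residueCount n (b + 2) b t ≤ n.factorial := by exact_mod_cast h1
    have h3 : (0 : ℚ) ≤ residueCount n (b + 2) b t := Nat.cast_nonneg _
    linarith
end

section
/- Let a ≥ 1 and n be integers with 2a − 1 < n, and let σ be a uniformly random permutation of {1,…,n}. Then the probability that D_{a,a−1}(σ) = 0 is strictly less than 1/n; equivalently, the number of permutations σ of {1,…,n} with D_{a,a−1}(σ) = 0 is strictly less than (n−1)!. -/
/-- Disjoint sets of `a` plus values and `a - 1` minus values with signed sum `n`; a value
`x : ℕ` stands for `x + 1 ∈ {1,…,n}`, and only the `2 * a` largest values are used. Here `a = k + 1`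
and `n = m + 2 * a`. -/
lemma exists_sets : ∀ k m : ℕ, ∃ X Y : Finset ℕ, Disjoint X Y ∧ X.card = k + 1 ∧ Y.card = k ∧
    (∀ x ∈ X, m ≤ x ∧ x < m + 2 * (k + 1)) ∧ (∀ x ∈ Y, m ≤ x ∧ x < m + 2 * (k + 1)) ∧
    ∑ x ∈ X, ((x : ℤ) + 1) - ∑ x ∈ Y, ((x : ℤ) + 1) = ((m + 2 * (k + 1) : ℕ) : ℤ)
  | 0, m => ⟨{m + 1}, ∅, by simp, by simp, by simp, by simp, by simp, by simp; ring⟩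
  | 1, m => by
    refine ⟨{m + 1, m + 2}, {m}, by simp, by simp, by simp, by simp, by simp, ?_⟩
    rw [Finset.sum_pair (by omega)]
    simp
    ring
  | k + 2, m => by
    obtain ⟨X, Y, hd, hX, hY, hXm, hYm, hs⟩ := exists_sets k (m + 4)
    have nX : ∀ j < 4, m + j ∉ X := fun j hj h => by have := hXm _ h; omega
    have nY : ∀ j < 4, m + j ∉ Y := fun j hj h => by have := hYm _ h; omega
    have x0 := nX 0 (by omega)
    have x1 := nX 1 (by omega)
    have x2 := nX 2 (by omega)
    have x3 := nX 3 (by omega)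
    have y0 := nY 0 (by omega)
    have y1 := nY 1 (by omega)
    have y2 := nY 2 (by omega)
    have y3 := nY 3 (by omega)
    have a1 : m + 0 ∉ insert (m + 3) X := by
      rw [Finset.mem_insert]; rintro (h | h)
      · omega
      · exact x0 h
    have a2 : m + 1 ∉ insert (m + 2) Y := by
      rw [Finset.mem_insert]; rintro (h | h)
      · omega
      · exact y1 h
    refine ⟨insert (m + 0) (insert (m + 3) X), insert (m + 1) (insert (m + 2) Y), ?_, ?_, ?_, ?_, ?_, ?_⟩
    · rw [Finset.disjoint_left] at hd ⊢
      grind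
    · rw [Finset.card_insert_of_notMem a1, Finset.card_insert_of_notMem x3, hX]
    · rw [Finset.card_insert_of_notMem a2, Finset.card_insert_of_notMem y2, hY]
    · intro x hx
      simp only [Finset.mem_insert] at hx
      rcases hx with h | h | h
      · omega
      · omega
      · have := hXm _ h; omega
    · intro x hx
      simp only [Finset.mem_insert] at hx
      rcases hx with h | h | h
      · omega
      · omega
      · have := hYm _ h; omega
    · rw [Finset.sum_insert a1, Finset.sum_insert a2, Finset.sum_insert x3, Finset.sum_insert y2]
      push_cast at hs ⊢
      linarith

/-- Two disjoint finsets can be moved by a permutation onto any two disjoint finsets of the same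
respective sizes. -/
lemma exists_perm_image {α : Type*} [Fintype α] [DecidableEq α] {A B X Y : Finset α}
    (hAB : Disjoint A B) (hXY : Disjoint X Y) (hA : A.card = X.card) (hB : B.card = Y.card) :
    ∃ σ : Equiv.Perm α, A.image σ = X ∧ B.image σ = Y := by
  let e₁ := Finset.equivOfCardEq hA
  let e₂ := Finset.equivOfCardEq hB
  let f : α → α := fun i => if h : i ∈ A then e₁ ⟨i, h⟩ else if h : i ∈ B then e₂ ⟨i, h⟩ else i
  have fA : ∀ i (h : i ∈ A), f i = e₁ ⟨i, h⟩ := fun i h => by simp [f, h]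
  have fB : ∀ i (h : i ∈ B), f i = e₂ ⟨i, h⟩ := fun i h => by
    simp [f, h, Finset.disjoint_right.1 hAB h]
  have memA : ∀ i ∈ A, f i ∈ X := fun i h => by rw [fA i h]; exact (e₁ _).2
  have memB : ∀ i ∈ B, f i ∈ Y := fun i h => by rw [fB i h]; exact (e₂ _).2
  have hinj : Set.InjOn f (A ∪ B : Finset α) := by
    intro i hi j hj hij
    rw [Finset.mem_coe, Finset.mem_union] at hi hj
    rcases hi with hi | hi <;> rcases hj with hj | hj
    · rw [fA i hi, fA j hj] at hij
      simpa using e₁.injective (Subtype.ext hij)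
    · exact absurd (hij ▸ memA i hi) (Finset.disjoint_right.1 hXY (memB j hj))
    · exact absurd (hij ▸ memB i hi) (Finset.disjoint_left.1 hXY (memA j hj))
    · rw [fB i hi, fB j hj] at hij
      simpa using e₂.injective (Subtype.ext hij)
  obtain ⟨g, hg⟩ := Finset.exists_equiv_extend_of_card_eq (t := (Finset.univ : Finset α))
    (by simp) (Finset.subset_univ _) hinj
  refine ⟨g.trans (Equiv.subtypeUnivEquiv fun x => Finset.mem_univ x), ?_, ?_⟩
  · refine Finset.eq_of_subset_of_card_le ?_ ?_
    · intro y hy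
      obtain ⟨i, hi, rfl⟩ := Finset.mem_image.1 hy
      have := hg i (Finset.mem_union_left _ hi)
      simpa [this] using memA i hi
    · rw [Finset.card_image_of_injective _ (Equiv.injective _), hA]
  · refine Finset.eq_of_subset_of_card_le ?_ ?_
    · intro y hy
      obtain ⟨i, hi, rfl⟩ := Finset.mem_image.1 hy
      have := hg i (Finset.mem_union_right _ hi)
      simpa [this] using memB i hi
    · rw [Finset.card_image_of_injective _ (Equiv.injective _), hB]

lemma card_fst {n a : ℕ} (h : a ≤ n) :
    (Finset.univ.filter (fun i : Fin n => (i : ℕ) < a)).card = a := by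
  rw [Fin.card_filter_val_lt, min_eq_right h]

lemma card_snd {n a b : ℕ} (h : a + b ≤ n) :
    (Finset.univ.filter (fun i : Fin n => a ≤ (i : ℕ) ∧ (i : ℕ) < a + b)).card = b := by
  rw [← Finset.card_map Fin.valEmbedding]
  trans (Finset.Ico a (a + b)).card
  · congr 1
    ext x
    simp only [Finset.mem_map, Finset.mem_filter, Finset.mem_univ, true_and, Finset.mem_Ico,
      Fin.valEmbedding_apply]
    constructor
    · rintro ⟨i, hi, rfl⟩
      exact hi
    · intro hx
      exact ⟨⟨x, by omega⟩, hx, rfl⟩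
  · simp

lemma exists_D_eq (a n : ℕ) (ha : 1 ≤ a) (hn : 2 * a ≤ n) :
    ∃ τ : Equiv.Perm (Fin n), D n a (a - 1) τ = n := by
  obtain ⟨k, rfl⟩ : ∃ k, a = k + 1 := ⟨a - 1, by omega⟩
  obtain ⟨m, rfl⟩ : ∃ m, n = m + 2 * (k + 1) := ⟨n - 2 * (k + 1), by omega⟩
  obtain ⟨X, Y, hd, hX, hY, hXm, hYm, hs⟩ := exists_sets k m
  set n := m + 2 * (k + 1) with hn'
  let X' : Finset (Fin n) := X.attachFin fun x hx => (hXm x hx).2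
  let Y' : Finset (Fin n) := Y.attachFin fun x hx => (hYm x hx).2
  have hd' : Disjoint X' Y' := by
    rw [Finset.disjoint_left] at hd ⊢
    intro x hx hy
    exact hd (Finset.mem_attachFin _ |>.1 hx) (Finset.mem_attachFin _ |>.1 hy)
  have hAB : Disjoint (Finset.univ.filter (fun i : Fin n => (i : ℕ) < k + 1))
      (Finset.univ.filter (fun i : Fin n => k + 1 ≤ (i : ℕ) ∧ (i : ℕ) < k + 1 + k)) := by
    rw [Finset.disjoint_left]
    intro x hx hy
    simp only [Finset.mem_filter, Finset.mem_univ, true_and] at hx hy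
    omega
  obtain ⟨τ, h1, h2⟩ := exists_perm_image hAB hd'
    (by rw [card_fst (by omega), Finset.card_attachFin, hX])
    (by rw [card_snd (by omega), Finset.card_attachFin, hY])
  refine ⟨τ, ?_⟩
  have key : ∀ (Z : Finset ℕ) (hZ : ∀ x ∈ Z, x < n) (C : Finset (Fin n)),
      C.image τ = Z.attachFin hZ → ∑ i ∈ C, (((τ i : Fin n) : ℕ) + 1 : ℤ) = ∑ x ∈ Z, ((x : ℤ) + 1) := by
    intro Z hZ C hC
    rw [← Finset.map_valEmbedding_attachFin hZ, ← hC, Finset.sum_map,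
      Finset.sum_image (fun _ _ _ _ h => τ.injective h)]
    rfl
  rw [D, Nat.add_sub_cancel, key X _ _ h1, key Y _ _ h2, hs]

/-- Rotating all values by `k` increases `D_{a,a-1}` by `k` modulo `n`. -/
lemma D_rotate {n a : ℕ} [NeZero n] (ha : 1 ≤ a) (hn : 2 * a ≤ n) (σ : Equiv.Perm (Fin n))
    (k : Fin n) :
    ((D n a (a - 1) (σ.trans (Equiv.addRight k)) : ℤ) : ZMod n)
      = (D n a (a - 1) σ : ZMod n) + ((k : ℕ) : ZMod n) := by
  have hval : ∀ i, (((σ i + k : Fin n) : ℕ) : ZMod n) = ((σ i : ℕ) : ZMod n) + ((k : ℕ) : ZMod n) := by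
    intro i
    rw [Fin.val_add, ZMod.natCast_mod, Nat.cast_add]
  obtain ⟨b, rfl⟩ : ∃ b, a = b + 1 := ⟨a - 1, by omega⟩
  simp only [D, Nat.add_sub_cancel, Equiv.trans_apply, Equiv.coe_addRight]
  push_cast
  simp only [hval, Finset.sum_add_distrib, Finset.sum_const, card_fst (show b + 1 ≤ n by omega),
    card_snd (show b + 1 + b ≤ n by omega), nsmul_eq_mul]
  push_cast
  ring

/-- For `a ≥ 1` and `2a − 1 < n`, a uniformly random permutation `σ` of `{1,…,n}`
satisfies `D_{a,a−1}(σ) = 0` with probability strictly less than `1/n`. -/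
theorem prob_D_diffone_zero (a n : ℕ) (ha : 1 ≤ a) (hn : 2 * a - 1 < n) :
    ((Finset.univ.filter
        (fun σ : Equiv.Perm (Fin n) => D n a (a - 1) σ = 0)).card : ℚ)
      / (Nat.factorial n : ℚ) < 1 / (n : ℚ) := by
  have hn2 : 2 * a ≤ n := by omega
  have hn0 : 0 < n := by omega
  have : NeZero n := ⟨hn0.ne'⟩
  obtain ⟨τ, hτ⟩ := exists_D_eq a n ha hn2
  set S := Finset.univ.filter (fun σ : Equiv.Perm (Fin n) => D n a (a - 1) σ = 0) with hS
  have hτS : τ ∉ S := by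
    simp [hS, hτ, hn0.ne']
  have hmod : ∀ σ ∈ insert τ S, ((D n a (a - 1) σ : ℤ) : ZMod n) = 0 := by
    intro σ hσ
    rcases Finset.mem_insert.1 hσ with rfl | h
    · simp [hτ]
    · simp [(Finset.mem_filter.1 h).2]
  have hcard : ((insert τ S) ×ˢ (Finset.univ : Finset (Fin n))).card
      ≤ (Finset.univ : Finset (Equiv.Perm (Fin n))).card := by
    refine Finset.card_le_card_of_injOn (fun p => p.1.trans (Equiv.addRight p.2))
      (fun _ _ => Finset.mem_coe.2 (Finset.mem_univ _)) ?_
    rintro ⟨σ, k⟩ h ⟨ρ, l⟩ h' heq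
    have hσ := hmod σ (Finset.mem_product.1 (Finset.mem_coe.1 h)).1
    have hρ := hmod ρ (Finset.mem_product.1 (Finset.mem_coe.1 h')).1
    simp only at heq
    have hk : ((k : ℕ) : ZMod n) = ((l : ℕ) : ZMod n) := by
      have := D_rotate ha hn2 σ k
      rw [heq, D_rotate ha hn2 ρ l, hσ, hρ, zero_add, zero_add] at this
      exact this.symm
    have hkl : k = l := by
      rw [ZMod.natCast_eq_natCast_iff'] at hk
      rw [Nat.mod_eq_of_lt k.2, Nat.mod_eq_of_lt l.2] at hk
      exact Fin.ext hk
    subst hkl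
    have : σ = ρ := by
      ext i
      have := Equiv.congr_fun heq i
      simp only [Equiv.trans_apply, Equiv.coe_addRight, add_left_inj] at this
      rw [this]
    rw [this]
  rw [Finset.card_product, Finset.card_insert_of_notMem hτS, Finset.card_univ, Finset.card_univ,
    Fintype.card_fin, Fintype.card_perm, Fintype.card_fin] at hcard
  have hlt : S.card * n < n.factorial := by
    calc S.card * n < (S.card + 1) * n := by nlinarith
      _ ≤ _ := hcard
  rw [div_lt_div_iff₀ (by exact_mod_cast n.factorial_pos) (by exact_mod_cast hn0), one_mul]
  exact_mod_cast hlt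
end

section
/- Let a ≥ 1 be an integer, let n = 2a + 1, and let σ be a uniformly random permutation of {1,…,n}. Then for every integer t, the probability that D_{a,a}(σ) = t is at most 1/(2a+1); equivalently, the number of permutations σ of {1,…,2a+1} with D_{a,a}(σ) = t is at most (2a+1)!/(2a+1) = (2a)!. -/
lemma D_add_total (a : ℕ) (σ : Equiv.Perm (Fin (2 * a + 1))) :
    D (2 * a + 1) a a σ + ∑ i : Fin (2 * a + 1), ((i : ℕ) + 1 : ℤ) =
      2 * (∑ i ∈ Finset.univ.filter (fun i : Fin (2 * a + 1) => (i : ℕ) < a),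
        ((σ i : ℕ) + 1 : ℤ)) + ((σ (Fin.last (2 * a)) : ℕ) + 1 : ℤ) := by
  have hlast : ((σ (Fin.last (2 * a)) : ℕ) + 1 : ℤ) =
      ∑ i : Fin (2 * a + 1), if i = Fin.last (2 * a) then ((σ i : ℕ) + 1 : ℤ) else 0 := by
    simp
  rw [hlast, ← Equiv.sum_comp σ (fun i : Fin (2 * a + 1) => ((i : ℕ) + 1 : ℤ)), D,
    Finset.sum_filter, Finset.sum_filter, Finset.mul_sum, ← Finset.sum_sub_distrib,
    ← Finset.sum_add_distrib, ← Finset.sum_add_distrib]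
  refine Finset.sum_congr rfl fun i _ => ?_
  have hi := i.isLt
  simp only [Fin.ext_iff, Fin.val_last]
  split_ifs <;> omega

lemma card_last_parity_le (a : ℕ) (p : ℤ) :
    (Finset.univ.filter (fun τ : Equiv.Perm (Fin (2 * a + 1)) =>
      ((τ (Fin.last (2 * a)) : ℕ) : ℤ) % 2 = p)).card ≤ (a + 1) * (2 * a).factorial := by
  set P : Finset (Fin (2 * a + 1)) := Finset.univ.filter (fun c => ((c : ℕ) : ℤ) % 2 = p) with hP
  have hPcard : P.card ≤ a + 1 := by
    rw [← Finset.card_range (a + 1)]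
    refine Finset.card_le_card_of_injOn (fun c => (c : ℕ) / 2) ?_ ?_
    · intro c _
      have := c.isLt
      simp only [Finset.coe_range, Set.mem_Iio]
      omega
    · intro c hc d hd h
      simp only [hP, Finset.coe_filter, Finset.mem_univ, true_and, Set.mem_ofPred_eq] at hc hd h
      ext
      omega
  -- Moving the last position to `0`, `decomposeFin` splits off the last value of `τ`.
  let f : Equiv.Perm (Fin (2 * a + 1)) → Fin (2 * a + 1) × Equiv.Perm (Fin (2 * a)) :=
    fun τ => Equiv.Perm.decomposeFin (τ * Equiv.swap 0 (Fin.last (2 * a)))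
  have hfst (τ : Equiv.Perm (Fin (2 * a + 1))) : (f τ).1 = τ (Fin.last (2 * a)) := by
    have h := Equiv.Perm.decomposeFin_symm_apply_zero (f τ).1 (f τ).2
    simpa [f] using h.symm
  calc _ ≤ (P ×ˢ (Finset.univ : Finset (Equiv.Perm (Fin (2 * a))))).card := by
        refine Finset.card_le_card_of_injOn f ?_ ?_
        · intro τ hτ
          simpa [hP, hfst] using hτ
        · intro τ _ τ' _ h
          exact mul_right_cancel (Equiv.Perm.decomposeFin.injective h)
    _ = P.card * (2 * a).factorial := by
        rw [Finset.card_product, Finset.card_univ, Fintype.card_perm, Fintype.card_fin]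
    _ ≤ _ := Nat.mul_le_mul_right _ hPcard

lemma card_D_eq_le (a : ℕ) (ha : 1 ≤ a) (t : ℤ) :
    (Finset.univ.filter
      (fun σ : Equiv.Perm (Fin (2 * a + 1)) => D (2 * a + 1) a a σ = t)).card
        ≤ (2 * a).factorial := by
  set T := Finset.univ.filter
    (fun σ : Equiv.Perm (Fin (2 * a + 1)) => D (2 * a + 1) a a σ = t) with hT
  set K : ℤ := ∑ i : Fin (2 * a + 1), ((i : ℕ) + 1 : ℤ) with hK
  -- Zero-based indices: `m` is the `a`-th position, and `pos j` runs over the `a`-th to `2a`-th.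
  let m : Fin (2 * a + 1) := ⟨a - 1, by omega⟩
  let pos : Fin (a + 1) → Fin (2 * a + 1) := fun j => ⟨a - 1 + j, by omega⟩
  let g : Equiv.Perm (Fin (2 * a + 1)) × Fin (a + 1) → Equiv.Perm (Fin (2 * a + 1)) :=
    fun x => x.1 * Equiv.swap m (pos x.2)
  have hfix (σ : Equiv.Perm (Fin (2 * a + 1))) (j : Fin (a + 1)) (i : Fin (2 * a + 1))
      (hi : (i : ℕ) < a - 1 ∨ (i : ℕ) = 2 * a) : g (σ, j) i = σ i := by
    have hj := j.isLt
    have h1 : i ≠ m := by simp only [m, ne_eq, Fin.ext_iff]; omega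
    have h2 : i ≠ pos j := by simp only [pos, ne_eq, Fin.ext_iff]; omega
    simp [g, Equiv.swap_apply_of_ne_of_ne h1 h2]
  have hsplit (σ : Equiv.Perm (Fin (2 * a + 1))) :
      ∑ i ∈ Finset.univ.filter (fun i : Fin (2 * a + 1) => (i : ℕ) < a), ((σ i : ℕ) + 1 : ℤ) =
      ((σ m : ℕ) + 1 : ℤ) + ∑ i ∈ Finset.univ.filter
        (fun i : Fin (2 * a + 1) => (i : ℕ) < a - 1), ((σ i : ℕ) + 1 : ℤ) := by
    have hnot : m ∉ Finset.univ.filter (fun i : Fin (2 * a + 1) => (i : ℕ) < a - 1) := by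
      simp [m]
    rw [← Finset.sum_insert (f := fun i => ((σ i : ℕ) + 1 : ℤ)) hnot]
    refine Finset.sum_congr ?_ fun _ _ => rfl
    ext i
    simp only [Finset.mem_filter, Finset.mem_univ, true_and, Finset.mem_insert, m, Fin.ext_iff]
    omega
  have hcard : (T ×ˢ (Finset.univ : Finset (Fin (a + 1)))).card ≤
      (Finset.univ.filter (fun τ : Equiv.Perm (Fin (2 * a + 1)) =>
        ((τ (Fin.last (2 * a)) : ℕ) : ℤ) % 2 = (t + K - 1) % 2)).card := by
    refine Finset.card_le_card_of_injOn g ?_ ?_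
    · rintro ⟨σ, j⟩ h
      simp only [hT, Finset.coe_product, Finset.coe_filter, Finset.mem_univ, true_and,
        Set.mem_prod, Set.mem_ofPred_eq] at h
      simp only [Finset.coe_filter, Finset.mem_univ, true_and, Set.mem_ofPred_eq]
      rw [hfix σ j _ (Or.inr rfl)]
      have := D_add_total a σ
      omega
    · rintro ⟨σ, j⟩ h ⟨σ', j'⟩ h' hg
      simp only [hT, Finset.coe_product, Finset.coe_filter, Finset.mem_univ, true_and,
        Set.mem_prod, Set.mem_ofPred_eq] at h h'
      have hagree (i : Fin (2 * a + 1)) (hi : (i : ℕ) < a - 1 ∨ (i : ℕ) = 2 * a) :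
          σ i = σ' i := by
        rw [← hfix σ j i hi, hg, hfix σ' j' i hi]
      have hm : σ m = σ' m := by
        have e := D_add_total a σ
        have e' := D_add_total a σ'
        rw [hsplit] at e e'
        have hs : ∑ i ∈ Finset.univ.filter (fun i : Fin (2 * a + 1) => (i : ℕ) < a - 1),
            ((σ i : ℕ) + 1 : ℤ) = ∑ i ∈ Finset.univ.filter
            (fun i : Fin (2 * a + 1) => (i : ℕ) < a - 1), ((σ' i : ℕ) + 1 : ℤ) :=
          Finset.sum_congr rfl fun i hi => by
            rw [hagree i (Or.inl (Finset.mem_filter.mp hi).2)]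
        rw [hs, hagree (Fin.last (2 * a)) (Or.inr rfl)] at e
        ext
        omega
      -- The value `σ m = σ' m` sits at `pos j` and at `pos j'` in the common image.
      have hpos : pos j = pos j' := by
        apply (g (σ, j)).injective
        calc g (σ, j) (pos j) = σ m := by simp [g]
          _ = σ' m := hm
          _ = g (σ', j') (pos j') := by simp [g]
          _ = g (σ, j) (pos j') := by rw [hg]
      have hj : j = j' := by
        simp only [pos, Fin.mk.injEq] at hpos
        ext
        omega
      subst hj
      exact Prod.ext (mul_right_cancel hg) rfl
  have hle := hcard.trans (card_last_parity_le a _)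
  rw [Finset.card_product, Finset.card_univ, Fintype.card_fin, mul_comm] at hle
  exact Nat.le_of_mul_le_mul_left hle (Nat.succ_pos a)

/-- For `a ≥ 1` and `n = 2a + 1`, a uniformly random permutation `σ` of `{1,…,2a+1}`
satisfies `D_{a,a}(σ) = t` with probability at most `1/(2a+1)`, for every `t`. -/
theorem prob_D_equal_basecase (a : ℕ) (ha : 1 ≤ a) (t : ℤ) :
    ((Finset.univ.filter
        (fun σ : Equiv.Perm (Fin (2 * a + 1)) => D (2 * a + 1) a a σ = t)).card : ℚ)
      / (Nat.factorial (2 * a + 1) : ℚ) ≤ 1 / ((2 * a + 1 : ℕ) : ℚ) := by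
  have h := card_D_eq_le a ha t
  rw [div_le_div_iff₀ (by exact_mod_cast Nat.factorial_pos _) (by positivity), one_mul,
    Nat.factorial_succ, mul_comm]
  exact_mod_cast Nat.mul_le_mul_left (2 * a + 1) h
end

section
/- Let a ≥ 1 and n be integers with n > 2a, and let σ be a uniformly random permutation of {1,…,n}. Then the probability that D_{a,a}(σ) = 0 is at most 1/n; moreover, this inequality is strict unless a = 2 and n = 5. -/
open Finset

namespace SignedWords

/-! ### Signed words -/

/-- The number of letters `+` of a word. Words are functions `Fin m → SignType`, with letters
`1`, `-1`, `0` standing for `+`, `-`, `0`. -/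
def plus {m : ℕ} (w : Fin m → SignType) : ℕ := ∑ x, if w x = 1 then 1 else 0

/-- The number of letters `-` of a word. -/
def minus {m : ℕ} (w : Fin m → SignType) : ℕ := ∑ x, if w x = -1 then 1 else 0

/-- The sum of the positions of the `+` minus the sum of the positions of the `-`, where the
positions of a word of length `m` are numbered `1,…,m`. -/
def val {m : ℕ} (w : Fin m → SignType) : ℤ := ∑ x : Fin m, ((x : ℤ) + 1) * (w x : ℤ)

/-- The words of length `m` with `i` letters `+` and `j` letters `-`. -/
def words (m i j : ℕ) : Finset (Fin m → SignType) :=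
  univ.filter fun w => plus w = i ∧ minus w = j

/-- The number of words of length `m` with `i` letters `+` and `j` letters `-`. -/
def total (m i j : ℕ) : ℕ := (words m i j).card

/-- The number of those words with value `k`. -/
def count (m i j : ℕ) (k : ℤ) : ℕ := ((words m i j).filter fun w => val w = k).card

/-- The number of those words with value congruent to `c` modulo `m`. -/
def residue (m i j : ℕ) (c : ZMod m) : ℕ :=
  ((words m i j).filter fun w => ((val w : ℤ) : ZMod m) = c).card

lemma mem_words {m i j : ℕ} {w : Fin m → SignType} :
    w ∈ words m i j ↔ plus w = i ∧ minus w = j := by simp [words]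

lemma plus_comp {m : ℕ} (w : Fin m → SignType) (e : Equiv.Perm (Fin m)) :
    plus (w ∘ e) = plus w := Equiv.sum_comp e fun x => if w x = 1 then 1 else 0

lemma minus_comp {m : ℕ} (w : Fin m → SignType) (e : Equiv.Perm (Fin m)) :
    minus (w ∘ e) = minus w := Equiv.sum_comp e fun x => if w x = -1 then 1 else 0

lemma mem_words_comp {m i j : ℕ} {w : Fin m → SignType} (e : Equiv.Perm (Fin m)) :
    w ∘ e ∈ words m i j ↔ w ∈ words m i j := by
  simp [mem_words, plus_comp, minus_comp]

lemma sum_letters {m : ℕ} (w : Fin m → SignType) :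
    ∑ x, (w x : ℤ) = (plus w : ℤ) - minus w := by
  unfold plus minus
  push_cast
  rw [← sum_sub_distrib]
  refine sum_congr rfl fun x _ => ?_
  rcases w x with _ | _ | _ <;> decide

/-! ### The last letter -/

/-- Deleting the last letter `s` is a bijection; `i'` and `j'` are the letter counts of what
remains. -/
lemma card_last {m i j i' j' : ℕ} (s : SignType) (hi : i = i' + if s = 1 then 1 else 0)
    (hj : j = j' + if s = -1 then 1 else 0) (P : (Fin m → SignType) → Prop) [DecidablePred P] :
    ((words (m + 1) i j).filter fun w => w (Fin.last m) = s ∧ P (Fin.init w)).card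
      = ((words m i' j').filter P).card := by
  have hp : ∀ w : Fin (m + 1) → SignType,
      plus w = plus (Fin.init w) + if w (Fin.last m) = 1 then 1 else 0 := fun w => by
    simp only [plus, Fin.sum_univ_castSucc]; rfl
  have hm : ∀ w : Fin (m + 1) → SignType,
      minus w = minus (Fin.init w) + if w (Fin.last m) = -1 then 1 else 0 := fun w => by
    simp only [minus, Fin.sum_univ_castSucc]; rfl
  subst hi hj
  refine card_nbij' (fun w => Fin.init w) (fun w => Fin.snoc (α := fun _ => SignType) w s)
    ?_ ?_ ?_ ?_
  · intro w hw
    simp only [coe_filter, Set.mem_ofPred_eq, mem_words, hp, hm] at hw ⊢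
    obtain ⟨⟨h1, h2⟩, h3, h4⟩ := hw
    rw [h3] at h1 h2
    exact ⟨⟨by omega, by omega⟩, h4⟩
  · intro w hw
    simp only [coe_filter, Set.mem_ofPred_eq, mem_words, hp, hm] at hw ⊢
    simp [hw]
  · intro w hw
    simp only [coe_filter, Set.mem_ofPred_eq] at hw
    simp only
    rw [← hw.2.1, Fin.snoc_init_self]
  · intro w _
    simp

lemma val_succ {m : ℕ} (w : Fin (m + 1) → SignType) :
    val w = val (Fin.init w) + (m + 1) * (w (Fin.last m) : ℤ) := by
  simp [val, Fin.sum_univ_castSucc, Fin.init]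

lemma count_last {m i j i' j' : ℕ} (s : SignType) (hi : i = i' + if s = 1 then 1 else 0)
    (hj : j = j' + if s = -1 then 1 else 0) (k : ℤ) :
    ((words (m + 1) i j).filter fun w => val w = k ∧ w (Fin.last m) = s).card
      = count m i' j' (k - (m + 1) * (s : ℤ)) := by
  rw [count, ← card_last s hi hj]
  congr 1
  refine filter_congr fun w _ => ?_
  rw [val_succ]
  constructor
  · rintro ⟨h, h'⟩
    rw [h'] at h
    exact ⟨h', by linarith⟩
  · rintro ⟨h', h⟩
    rw [h']
    exact ⟨by linarith, rfl⟩

lemma total_last {m i j i' j' : ℕ} (s : SignType) (hi : i = i' + if s = 1 then 1 else 0)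
    (hj : j = j' + if s = -1 then 1 else 0) :
    ((words (m + 1) i j).filter fun w => w (Fin.last m) = s).card = total m i' j' := by
  have := card_last (m := m) s hi hj (fun _ => True)
  simpa [total] using this

lemma card_split {m : ℕ} (A : Finset (Fin (m + 1) → SignType)) :
    A.card = (A.filter fun w => w (Fin.last m) = 0).card
      + (A.filter fun w => w (Fin.last m) = 1).card
      + (A.filter fun w => w (Fin.last m) = -1).card := by
  rw [card_eq_sum_card_fiberwise (f := fun w => w (Fin.last m)) (t := univ)
    (fun _ _ => mem_coe.2 (mem_univ _))]
  have : (univ : Finset SignType) = {0, 1, -1} := by decide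
  rw [this, sum_insert (by decide), sum_insert (by decide), sum_singleton, add_assoc]

lemma count_succ (m i j : ℕ) (k : ℤ) :
    count (m + 1) (i + 1) (j + 1) k = count m (i + 1) (j + 1) k
      + count m i (j + 1) (k - (m + 1)) + count m (i + 1) j (k + (m + 1)) := by
  rw [count, card_split]
  simp only [filter_filter]
  rw [count_last 0 (i := i + 1) (i' := i + 1) (j := j + 1) (j' := j + 1) rfl rfl,
    count_last 1 (i := i + 1) (i' := i) (j := j + 1) (j' := j + 1) rfl rfl,
    count_last (-1) (i := i + 1) (i' := i + 1) (j := j + 1) (j' := j) rfl rfl]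
  simp [sub_eq_add_neg, add_comm]

lemma total_succ (m i j : ℕ) :
    total (m + 1) (i + 1) (j + 1) = total m (i + 1) (j + 1)
      + total m i (j + 1) + total m (i + 1) j := by
  rw [total, card_split,
    total_last 0 (i := i + 1) (i' := i + 1) (j := j + 1) (j' := j + 1) rfl rfl,
    total_last 1 (i := i + 1) (i' := i) (j := j + 1) (j' := j + 1) rfl rfl,
    total_last (-1) (i := i + 1) (i' := i + 1) (j := j + 1) (j' := j) rfl rfl]

/-- Double counting of pairs of a word and an occurrence of `s` in it: the number of words with
letter `s` at position `x` does not depend on `x`. -/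
lemma last_ratio {m i j c : ℕ} (s : SignType)
    (h : ∀ w ∈ words (m + 1) i j, (∑ x, if w x = s then 1 else 0) = c) :
    (m + 1) * ((words (m + 1) i j).filter fun w => w (Fin.last m) = s).card
      = c * total (m + 1) i j := by
  have hx : ∀ x : Fin (m + 1), ((words (m + 1) i j).filter fun w => w x = s).card
      = ((words (m + 1) i j).filter fun w => w (Fin.last m) = s).card := by
    intro x
    refine card_equiv (Equiv.arrowCongr (Equiv.swap x (Fin.last m)) (Equiv.refl _)) fun w => ?_
    simp only [mem_filter]
    have : Equiv.arrowCongr (Equiv.swap x (Fin.last m)) (Equiv.refl _) w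
        = w ∘ Equiv.swap x (Fin.last m) := by
      ext y; simp
    rw [this, mem_words_comp]
    simp
  calc (m + 1) * ((words (m + 1) i j).filter fun w => w (Fin.last m) = s).card
      = ∑ x : Fin (m + 1), ((words (m + 1) i j).filter fun w => w x = s).card := by
        simp [hx]
    _ = ∑ w ∈ words (m + 1) i j, ∑ x, (if w x = s then 1 else 0) := by
        simp only [card_filter]
        rw [sum_comm]
    _ = c * total (m + 1) i j := by
        rw [sum_congr rfl h, sum_const, smul_eq_mul, total, mul_comm]

lemma total_plus (m i j : ℕ) : (m + 1) * total m i j = (i + 1) * total (m + 1) (i + 1) j := by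
  rw [← total_last 1 (i' := i) (j' := j) (j := j) rfl rfl]
  exact last_ratio 1 fun w hw => (mem_words.1 hw).1

lemma total_minus (m i j : ℕ) : (m + 1) * total m i j = (j + 1) * total (m + 1) i (j + 1) := by
  rw [← total_last (-1) (i' := i) (j' := j) (i := i) rfl rfl]
  exact last_ratio (-1) fun w hw => (mem_words.1 hw).2

lemma zeros_eq {m : ℕ} (w : Fin m → SignType) :
    (∑ x, if w x = 0 then 1 else 0) + plus w + minus w = m := by
  unfold plus minus
  rw [← sum_add_distrib, ← sum_add_distrib]
  have : ∀ x, (((if w x = 0 then 1 else 0) + if w x = 1 then 1 else 0)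
      + if w x = -1 then 1 else 0) = 1 := by
    intro x
    rcases w x with _ | _ | _ <;> decide
  simp [this]

lemma total_zero {m i j : ℕ} :
    (m + 1) * total m i j = (m + 1 - i - j) * total (m + 1) i j := by
  rw [← total_last 0 (i' := i) (j' := j) (i := i) (j := j) rfl rfl]
  refine last_ratio 0 fun w hw => ?_
  have := zeros_eq w
  have h := mem_words.1 hw
  omega

lemma total_eq_zero {m i j : ℕ} (h : m < i + j) : total m i j = 0 := by
  rw [total, card_eq_zero, eq_empty_iff_forall_notMem]
  intro w hw
  have := zeros_eq w
  have h := mem_words.1 hw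
  omega

/-! ### Symmetries -/

/-- Reversing a word replaces each position `x` by `m + 1 - x`. -/
lemma count_rev (m i j : ℕ) (k : ℤ) :
    count m i j k = count m i j ((m + 1) * ((i : ℤ) - j) - k) := by
  refine card_equiv (Equiv.arrowCongr Fin.revPerm (Equiv.refl _)) fun w => ?_
  have hw : Equiv.arrowCongr Fin.revPerm (Equiv.refl _) w = w ∘ Fin.revPerm := by
    ext y; simp
  rw [hw, mem_filter, mem_filter, mem_words_comp]
  refine and_congr_right fun h => ?_
  have hs := sum_letters w
  rw [(mem_words.1 h).1, (mem_words.1 h).2] at hs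
  have : val (w ∘ Fin.revPerm) = (m + 1) * ((i : ℤ) - j) - val w := by
    rw [← hs, val, ← Equiv.sum_comp Fin.revPerm, val, mul_sum, ← sum_sub_distrib]
    refine sum_congr rfl fun x _ => ?_
    have hx := x.isLt
    have : ((Fin.rev x : ℕ) : ℤ) = m - (x + 1) := by rw [Fin.val_rev]; omega
    simp only [Function.comp, Fin.revPerm_apply, Fin.rev_rev, this]
    ring
  rw [this]
  constructor <;> intro h <;> linarith

lemma count_neg (m i j : ℕ) (k : ℤ) : count m i j k = count m j i (-k) := by
  have hs : ∀ s : SignType, -s = 1 ↔ s = -1 := by decide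
  have hs' : ∀ s : SignType, -s = -1 ↔ s = 1 := by decide
  refine card_equiv (Equiv.neg _) fun w => ?_
  have h1 : plus (-w) = minus w := by simp [plus, minus, hs]
  have h2 : minus (-w) = plus w := by simp [plus, minus, hs']
  have h3 : val (-w) = -val w := by
    rw [val, val, ← sum_neg_distrib]
    refine sum_congr rfl fun x _ => ?_
    have : ∀ s : SignType, ((-s : SignType) : ℤ) = -(s : ℤ) := by decide
    rw [Pi.neg_apply, this]; ring
  simp only [Equiv.neg_apply, mem_filter, mem_words, h1, h2, h3, neg_inj]
  tauto

/-! ### Rotation -/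

/-- The cyclic rotation moving each letter one position up and the last letter to position `1`. -/
def rot (m : ℕ) : (Fin (m + 1) → SignType) ≃ (Fin (m + 1) → SignType) :=
  Equiv.arrowCongr (finRotate (m + 1)) (Equiv.refl _)

lemma rot_mem {m i j : ℕ} {w : Fin (m + 1) → SignType} :
    rot m w ∈ words (m + 1) i j ↔ w ∈ words (m + 1) i j := by
  have : rot m w = w ∘ (finRotate (m + 1)).symm := by ext y; rfl
  rw [this, mem_words_comp]

lemma val_rot {m i j : ℕ} {w : Fin (m + 1) → SignType} (h : w ∈ words (m + 1) i j) :
    val (rot m w) = val w + ((i : ℤ) - j) - (m + 1) * (w (Fin.last m) : ℤ) := by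
  have hs := sum_letters w
  rw [(mem_words.1 h).1, (mem_words.1 h).2] at hs
  rw [← hs, val, ← Equiv.sum_comp (finRotate (m + 1)), val, Fin.sum_univ_castSucc,
    Fin.sum_univ_castSucc, Fin.sum_univ_castSucc]
  have h1 : ∀ x, rot m w (finRotate (m + 1) x) = w x := fun x => by simp [rot]
  simp only [h1]
  have h2 : ∀ x : Fin m, finRotate (m + 1) x.castSucc = x.succ := fun x => by simp
  simp only [h2, finRotate_last, Fin.val_succ, Fin.val_castSucc, Fin.val_zero, Fin.val_last]
  push_cast
  have : ∑ x : Fin m, ((x : ℤ) + 1 + 1) * (w x.castSucc : ℤ)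
      = ∑ x : Fin m, ((x : ℤ) + 1) * (w x.castSucc : ℤ) + ∑ x : Fin m, (w x.castSucc : ℤ) := by
    rw [← sum_add_distrib]
    exact sum_congr rfl fun x _ => by ring
  rw [this]
  ring

lemma residue_shift (m i j : ℕ) (c : ZMod (m + 1)) :
    residue (m + 1) i j c = residue (m + 1) i j (c + ((i : ZMod (m + 1)) - j)) := by
  refine card_equiv (rot m) fun w => ?_
  rw [mem_filter, mem_filter, rot_mem]
  refine and_congr_right fun h => ?_
  rw [val_rot h]
  have : ((m : ZMod (m + 1)) + 1) = 0 := by exact_mod_cast ZMod.natCast_self (m + 1)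
  push_cast
  rw [this, zero_mul, sub_zero, add_left_inj]

lemma sum_residue (m i j : ℕ) : ∑ c, residue (m + 1) i j c = total (m + 1) i j :=
  (card_eq_sum_card_fiberwise (fun _ _ => mem_coe.2 (mem_univ _))).symm

lemma count_le_residue (m i j : ℕ) (k : ℤ) : count m i j k ≤ residue m i j (k : ZMod m) :=
  card_le_card fun w hw => by
    rw [mem_filter] at hw ⊢
    exact ⟨hw.1, by rw [hw.2]⟩

lemma const_of_shift {m : ℕ} (f : ZMod (m + 1) → ℕ) (h : ∀ c, f (c + 1) = f c)
    (c : ZMod (m + 1)) : (m + 1) * f c = ∑ d, f d := by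
  have h0 : ∀ t : ℕ, f (t : ZMod (m + 1)) = f 0 := by
    intro t
    induction t with
    | zero => simp
    | succ t ih => rw [Nat.cast_succ, h, ih]
  have h1 : ∀ d, f d = f 0 := fun d => by rw [← h0 d.val, ZMod.natCast_zmod_val]
  simp only [h1, sum_const, card_univ, ZMod.card, smul_eq_mul]

lemma residue_one (m i : ℕ) (c : ZMod (m + 1)) :
    (m + 1) * residue (m + 1) i (i + 1) c = total (m + 1) i (i + 1) := by
  rw [← sum_residue]
  refine const_of_shift _ (fun c => ?_) c
  rw [residue_shift]
  congr 1
  push_cast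
  ring

lemma residue_two_aux (m i : ℕ) (c : ZMod (m + 1)) :
    residue (m + 1) i (i + 2) (c + 2) = residue (m + 1) i (i + 2) c := by
  rw [residue_shift]
  congr 1
  push_cast
  ring

/-- Rotation by one step shifts the residue by `-2`, so the sum of the counts of two consecutive
residues is constant, also when `m + 1` is even. -/
lemma residue_two (m i : ℕ) (c : ZMod (m + 1)) :
    (m + 1) * residue (m + 1) i (i + 2) c ≤ 2 * total (m + 1) i (i + 2) := by
  set f := residue (m + 1) i (i + 2) with hf
  have h := const_of_shift (fun c => f c + f (c + 1)) (fun c => by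
    have := residue_two_aux m i c
    rw [add_assoc c 1 1, one_add_one_eq_two]
    rw [← hf] at this
    rw [this, add_comm]) c
  have h2 : ∑ d, f (d + 1) = ∑ d, f d := Equiv.sum_comp (Equiv.addRight (1 : ZMod (m + 1))) f
  rw [sum_add_distrib, h2, hf, sum_residue, ← hf] at h
  nlinarith [Nat.zero_le ((m + 1) * f (c + 1))]

lemma residue_two_odd (t i : ℕ) (c : ZMod (2 * t + 1)) :
    (2 * t + 1) * residue (2 * t + 1) i (i + 2) c = total (2 * t + 1) i (i + 2) := by
  rw [← sum_residue]
  refine const_of_shift _ (fun c => ?_) c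
  have h : ∀ s : ℕ, residue (2 * t + 1) i (i + 2) (c + 2 * s) = residue (2 * t + 1) i (i + 2) c := by
    intro s
    induction s with
    | zero => simp
    | succ s ih =>
      rw [← ih, ← residue_two_aux _ _ (c + 2 * (s : ZMod (2 * t + 1)))]
      congr 1
      push_cast
      ring
  rw [← h (t + 1)]
  congr 1
  have : (2 * (t : ZMod (2 * t + 1)) + 1) = 0 := by exact_mod_cast ZMod.natCast_self (2 * t + 1)
  push_cast
  linear_combination -this

/-! ### Off-centre values -/

/-- Two sets of size `count (m + 1) (i + 1) (i + 2) 0` inside the residue class `0`: the words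
of value `0`, and the words whose rotation has value `-(m + 2)`. The words in both end in `+`. -/
lemma two_mul_count_le (m i : ℕ) :
    2 * count (m + 1) (i + 1) (i + 2) 0
      ≤ residue (m + 1) (i + 1) (i + 2) 0 + count m i (i + 2) (-(m + 1)) := by
  -- The residue class `0`, and the two sets to be compared inside it.
  set U := (words (m + 1) (i + 1) (i + 2)).filter fun w => ((val w : ℤ) : ZMod (m + 1)) = 0
  set P := (words (m + 1) (i + 1) (i + 2)).filter fun w => val w = 0
  set Q := (words (m + 1) (i + 1) (i + 2)).filter fun w => val (rot m w) = -(m + 2)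
  have hm : ((m : ZMod (m + 1)) + 1) = 0 := by exact_mod_cast ZMod.natCast_self (m + 1)
  have hP : P.card = count (m + 1) (i + 1) (i + 2) 0 := rfl
  have hQ : Q.card = count (m + 1) (i + 1) (i + 2) 0 := by
    -- By reversal, the value `-(m + 2)` is as frequent as the value `0`.
    rw [count_rev]
    refine card_equiv (rot m) fun w => ?_
    rw [mem_filter, mem_filter, rot_mem]
    refine and_congr_right fun _ => ?_
    push_cast
    constructor <;> intro h <;> linarith
  have hPU : P ⊆ U := fun w hw => by
    simp only [P, U, mem_filter] at hw ⊢
    exact ⟨hw.1, by rw [hw.2, Int.cast_zero]⟩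
  have hQU : Q ⊆ U := fun w hw => by
    simp only [Q, U, mem_filter] at hw ⊢
    refine ⟨hw.1, ?_⟩
    have h := val_rot hw.1
    rw [hw.2] at h
    have h' : val w = (m + 1) * ((w (Fin.last m) : ℤ) - 1) := by push_cast at h; linarith
    rw [h']
    push_cast
    rw [hm, zero_mul]
  have hPQ : (P ∩ Q).card ≤ count m i (i + 2) (-(m + 1)) := by
    have h := count_last (m := m) 1 (i := i + 1) (j := i + 2) (i' := i) (j' := i + 2)
      rfl rfl 0
    have h0 : (0 : ℤ) - (m + 1) * ((1 : SignType) : ℤ) = -(m + 1) := by simp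
    rw [← h0, ← h]
    refine card_le_card fun w hw => ?_
    simp only [P, Q, mem_inter, mem_filter] at hw ⊢
    obtain ⟨⟨hw, h1⟩, -, h2⟩ := hw
    refine ⟨hw, h1, ?_⟩
    have h3 := val_rot hw
    rw [h1, h2] at h3
    have h4 : ((m : ℤ) + 1) * ((w (Fin.last m) : ℤ) - 1) = 0 := by push_cast at h3; linarith
    have h5 : (w (Fin.last m) : ℤ) = 1 := by
      rcases mul_eq_zero.1 h4 with h | h
      · omega
      · omega
    have : ∀ s : SignType, (s : ℤ) = 1 → s = 1 := by decide
    exact this _ h5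
  have hU : U.card = residue (m + 1) (i + 1) (i + 2) 0 := rfl
  have h1 := card_union_add_card_inter P Q
  have h2 := card_le_card (union_subset hPU hQU)
  omega


/-- The estimate of `two_mul_count_le` combined with the rotation bounds for both terms. -/
lemma off_centre (m b : ℕ) :
    2 * (m + 2) * (m + 1) * count (m + 2) (b + 1) (b + 2) 0
      ≤ (m + 1 + 2 * (b + 1)) * total (m + 2) (b + 1) (b + 2) := by
  have h1 := two_mul_count_le (m + 1) b
  have h2 := residue_one (m + 1) (b + 1) 0
  have h3 := (Nat.mul_le_mul_left (m + 1) (count_le_residue (m + 1) b (b + 2)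
    (-((m + 1 : ℕ) + 1)))).trans (residue_two m b _)
  have h4 := total_plus (m + 1) b (b + 2)
  have h5 := Nat.mul_le_mul_left ((m + 2) * (m + 1)) h1
  have h6 := Nat.mul_le_mul_left (m + 2) h3
  simp only [add_assoc, Nat.reduceAdd] at *
  linear_combination h5 + h6 + (m + 1) * h2 + 2 * h4

/-- For words of even length, the word with its last letter removed has odd length, where rotation
by `2` gives exact equidistribution; this saves a factor `2` in the second term. -/
lemma off_centre_even (t b : ℕ) :
    2 * (2 * t + 2) * (2 * t + 1) * count (2 * t + 2) (b + 1) (b + 2) 0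
      ≤ (2 * t + 1 + (b + 1)) * total (2 * t + 2) (b + 1) (b + 2) := by
  have h1 := two_mul_count_le (2 * t + 1) b
  have h2 := residue_one (2 * t + 1) (b + 1) 0
  have h3 := (Nat.mul_le_mul_left (2 * t + 1) (count_le_residue (2 * t + 1) b (b + 2)
    (-((2 * t + 1 : ℕ) + 1)))).trans (residue_two_odd t b _).le
  have h4 := total_plus (2 * t + 1) b (b + 2)
  have h5 := Nat.mul_le_mul_left ((2 * t + 2) * (2 * t + 1)) h1
  have h6 := Nat.mul_le_mul_left (2 * t + 2) h3
  simp only [add_assoc, Nat.reduceAdd] at *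
  linear_combination h5 + h6 + (2 * t + 1) * h2 + h4

lemma count_step (m b : ℕ) :
    count (m + 1) (b + 2) (b + 2) 0
      = count m (b + 2) (b + 2) 0 + 2 * count m (b + 1) (b + 2) 0 := by
  rw [count_succ m (b + 1) (b + 1) 0, count_neg m (b + 1 + 1) (b + 1),
    count_rev m (b + 1) (b + 2) 0]
  have h1 : (0 : ℤ) - (m + 1) = (m + 1) * (((b + 1 : ℕ) : ℤ) - (b + 2 : ℕ)) - 0 := by
    push_cast; ring
  have h2 : -((0 : ℤ) + (m + 1)) = (m + 1) * (((b + 1 : ℕ) : ℤ) - (b + 2 : ℕ)) - 0 := by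
    push_cast; ring
  rw [h1, h2]
  ring

/-- The bound for words without letters `0`: the last letter is `+` or `-`, and in either case
rotation of the remaining letters equidistributes the value modulo `2b + 3`. -/
lemma count_full (b : ℕ) :
    (2 * b + 3) * count (2 * b + 4) (b + 2) (b + 2) 0 ≤ total (2 * b + 4) (b + 2) (b + 2) := by
  rw [count_step]
  have h0 : count (2 * b + 3) (b + 2) (b + 2) 0 = 0 :=
    Nat.le_zero.1 ((card_filter_le _ _).trans (total_eq_zero (by omega)).le)
  have h1 := count_le_residue (2 * b + 3) (b + 1) (b + 2) 0
  have h2 := residue_one (2 * b + 2) (b + 1) ((0 : ℤ) : ZMod (2 * b + 2 + 1))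
  have h3 := total_plus (2 * b + 3) (b + 1) (b + 2)
  have h4 : 2 * total (2 * b + 3) (b + 1) (b + 2) = total (2 * b + 4) (b + 2) (b + 2) := by
    have : (b + 2) * (2 * total (2 * b + 3) (b + 1) (b + 2))
        = (b + 2) * total (2 * b + 4) (b + 2) (b + 2) := by
      simp only [add_assoc, Nat.reduceAdd] at h3
      linarith
    exact Nat.eq_of_mul_eq_mul_left (by omega) this
  rw [h0, ← h4]
  simp only [add_assoc, Nat.reduceAdd] at h2
  nlinarith [Nat.mul_le_mul_left (2 * b + 3) h1]

/-! ### The bound for words -/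

/-- The case `n = 2a + 1` with `a = b + 2`. The factor `2(2b + 3) = 4b + 6` is at least `3b + 6`, with
equality only for `b = 0`. -/
lemma base_case (b : ℕ) :
    2 * (2 * b + 3) * ((2 * b + 5) * count (2 * b + 5) (b + 2) (b + 2) 0)
      ≤ (3 * b + 6) * total (2 * b + 5) (b + 2) (b + 2) := by
  have h1 := off_centre_even (b + 1) b
  have h2 := total_plus (2 * b + 4) (b + 1) (b + 2)
  have h3 := count_full b
  have h4 := total_zero (m := 2 * b + 4) (i := b + 2) (j := b + 2)
  have h5 : 2 * b + 4 + 1 - (b + 2) - (b + 2) = 1 := by omega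
  rw [h5, one_mul] at h4
  rw [count_step (2 * b + 4) b]
  have e : 2 * (b + 1) + 2 = 2 * b + 4 := by ring
  rw [e] at h1
  have h6 : (b + 2) * (4 * (2 * b + 3) * (2 * b + 5) * count (2 * b + 4) (b + 1) (b + 2) 0)
      ≤ (b + 2) * ((3 * b + 4) * total (2 * b + 5) (b + 2) (b + 2)) := by
    simp only [add_assoc, Nat.reduceAdd] at h2
    linear_combination (2 * b + 5) * h1 + (3 * b + 4) * h2
  have h7 := Nat.le_of_mul_le_mul_left h6 (by omega)
  simp only [add_assoc, Nat.reduceAdd] at h4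
  linear_combination h7 + 2 * (2 * b + 5) * h3 + 2 * h4

/-- With `a = b + 2` and `n = m + 3`, the share of words with value `0` and last letter `+` or `-`
is at most `(2a - 1) / (n (n - 1))`. -/
lemma inductive_step {m b : ℕ} (hm : 2 * b + 3 ≤ m) :
    (m + 2) * (m + 3) * (2 * count (m + 2) (b + 1) (b + 2) 0)
      ≤ (2 * b + 3) * total (m + 3) (b + 2) (b + 2) ∧
    (2 * b + 3 < m → 0 < total (m + 3) (b + 2) (b + 2) →
      (m + 2) * (m + 3) * (2 * count (m + 2) (b + 1) (b + 2) 0)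
        < (2 * b + 3) * total (m + 3) (b + 2) (b + 2)) := by
  have h1 := off_centre m b
  have h2 := total_plus (m + 2) (b + 1) (b + 2)
  simp only [add_assoc, Nat.reduceAdd] at h1 h2
  set Z := count (m + 2) (b + 1) (b + 2) 0
  set T' := total (m + 2) (b + 1) (b + 2)
  set T := total (m + 3) (b + 2) (b + 2)
  have h3 : (m + 1) * (b + 2) * ((m + 2) * (m + 3) * (2 * Z))
      ≤ (b + 2) * (m + 1 + 2 * (b + 1)) * ((b + 2) * T) := by
    rw [← h2]
    linear_combination (b + 2) * (m + 3) * h1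
  obtain ⟨d, rfl⟩ := Nat.exists_eq_add_of_le hm
  have h4 : (b + 2) * (2 * b + 3 + d + 1 + 2 * (b + 1)) * ((b + 2) * T) + (b + 1) * d * ((b + 2) * T)
      = (2 * b + 3 + d + 1) * (b + 2) * ((2 * b + 3) * T) := by ring
  constructor
  · refine le_of_mul_le_mul_left (a := (2 * b + 3 + d + 1) * (b + 2)) ?_ (by positivity)
    omega
  · intro hd hT
    refine Nat.lt_of_mul_lt_mul_left (a := (2 * b + 3 + d + 1) * (b + 2)) ?_
    have : 0 < (b + 1) * d * ((b + 2) * T) := by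
      have : 0 < d := by omega
      positivity
    omega

/-- For `a = 2`, `n = 6` the general estimates only give `≤`. Here `2 Z ≤ 9` for
`Z = count 5 1 2 0`, hence `2 Z ≤ 8`, which is enough. -/
lemma six_case : 6 * count 6 2 2 0 < total 6 2 2 := by
  have t0 : total 2 0 0 = 1 := by decide
  have t1 := total_minus 2 0 0
  have t2 := total_minus 3 0 1
  have t3 := total_plus 4 0 2
  have t4 := total_plus 5 1 2
  have t5 := total_zero (m := 5) (i := 2) (j := 2)
  have h1 := two_mul_count_le 4 0
  have h2 := residue_one 4 1 0
  have h3 := (Nat.mul_le_mul_left 4 (count_le_residue 4 0 2 (-((4 : ℕ) + 1)))).trans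
    (residue_two 3 0 _)
  have h4 := base_case 0
  have h5 := count_step 5 0
  norm_num at *
  omega

theorem count_bound (b d : ℕ) (hT : ∀ d, 0 < total (2 * b + 5 + d) (b + 2) (b + 2)) :
    (2 * b + 5 + d) * count (2 * b + 5 + d) (b + 2) (b + 2) 0
      ≤ total (2 * b + 5 + d) (b + 2) (b + 2) ∧
    (¬ (b = 0 ∧ d = 0) → (2 * b + 5 + d) * count (2 * b + 5 + d) (b + 2) (b + 2) 0
      < total (2 * b + 5 + d) (b + 2) (b + 2)) := by
  induction d with
  | zero =>
    have h := base_case b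
    have hT := hT 0
    simp only [add_zero, and_true] at *
    set N := (2 * b + 5) * count (2 * b + 5) (b + 2) (b + 2) 0
    set T := total (2 * b + 5) (b + 2) (b + 2)
    constructor
    · refine le_of_mul_le_mul_left (a := 2 * (2 * b + 3)) ?_ (by omega)
      nlinarith [Nat.zero_le (b * T)]
    · intro hb
      refine Nat.lt_of_mul_lt_mul_left (a := 2 * (2 * b + 3)) ?_
      have : 0 < b * T := Nat.mul_pos (by omega) hT
      nlinarith
  | succ d ih =>
    obtain ⟨s1, s2⟩ := inductive_step (m := 2 * b + 3 + d) (b := b) (by omega)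
    have hz := total_zero (m := 2 * b + 5 + d) (i := b + 2) (j := b + 2)
    have e1 : 2 * b + 5 + d + 1 - (b + 2) - (b + 2) = d + 2 := by omega
    rw [e1] at hz
    have hT' := hT (d + 1)
    have e2 : 2 * b + 3 + d + 2 = 2 * b + 5 + d := by ring
    have e3 : 2 * b + 3 + d + 3 = 2 * b + 5 + d + 1 := by ring
    rw [e2, e3] at s1 s2
    have hc := count_step (2 * b + 5 + d) b
    rw [← add_assoc] at *
    obtain ⟨ih1, ih2⟩ := ih
    have key : (2 * b + 5 + d) * ((2 * b + 5 + d + 1) * count (2 * b + 5 + d + 1) (b + 2) (b + 2) 0)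
        = (2 * b + 5 + d + 1) * ((2 * b + 5 + d) * count (2 * b + 5 + d) (b + 2) (b + 2) 0)
          + (2 * b + 5 + d) * (2 * b + 5 + d + 1)
            * (2 * count (2 * b + 5 + d) (b + 1) (b + 2) 0) := by
      rw [hc]; ring
    have tot : (2 * b + 5 + d) * total (2 * b + 5 + d + 1) (b + 2) (b + 2)
        = (2 * b + 5 + d + 1) * total (2 * b + 5 + d) (b + 2) (b + 2)
          + (2 * b + 3) * total (2 * b + 5 + d + 1) (b + 2) (b + 2) := by
      rw [hz]; ring
    have ih1' := Nat.mul_le_mul_left (2 * b + 5 + d + 1) ih1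
    constructor
    · refine le_of_mul_le_mul_left (a := 2 * b + 5 + d) ?_ (by omega)
      rw [key, tot]
      exact add_le_add ih1' s1
    · intro _
      by_cases h0 : b = 0 ∧ d = 0
      · obtain ⟨rfl, rfl⟩ := h0
        exact six_case
      · refine Nat.lt_of_mul_lt_mul_left (a := 2 * b + 5 + d) ?_
        rw [key, tot]
        exact add_lt_add_of_lt_of_le (Nat.mul_lt_mul_of_pos_left (ih2 h0) (by omega)) s1

/-! ### From permutations to words -/

/-- The coefficient of `σ(p)` in `D_{a,a}(σ)`. The word attached to `σ` is `pattern n a ∘ σ⁻¹`, whose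
letter at `x` is the coefficient of the value `x`. -/
def pattern (n a : ℕ) (p : Fin n) : SignType :=
  if (p : ℕ) < a then 1 else if (p : ℕ) < a + a then -1 else 0

lemma pattern_mem {n a : ℕ} (h : 2 * a < n) : pattern n a ∈ words n a a := by
  have h1 : ∀ p : Fin n, pattern n a p = 1 ↔ (p : ℕ) < a := by
    intro p; unfold pattern; split_ifs <;> simp_all
  have h2 : ∀ p : Fin n, pattern n a p = -1 ↔ a ≤ (p : ℕ) ∧ (p : ℕ) < a + a := by
    intro p; unfold pattern; split_ifs <;> simp_all
  rw [mem_words]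
  simp only [plus, minus, h1, h2]
  rw [Fin.sum_univ_eq_sum_range (fun p => if p < a then 1 else 0),
    Fin.sum_univ_eq_sum_range (fun p => if a ≤ p ∧ p < a + a then 1 else 0)]
  rw [← card_filter, ← card_filter]
  constructor
  · have : (range n).filter (fun p => p < a) = range a := by ext; simp; omega
    rw [this, card_range]
  · have : (range n).filter (fun p => a ≤ p ∧ p < a + a) = Ico a (a + a) := by ext; simp; omega
    rw [this, Nat.card_Ico]; omega

lemma D_eq_val (n a : ℕ) (σ : Equiv.Perm (Fin n)) :
    D n a a σ = val (pattern n a ∘ σ.symm) := by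
  rw [val, ← Equiv.sum_comp σ, D, sum_filter, sum_filter, ← sum_sub_distrib]
  refine sum_congr rfl fun p _ => ?_
  simp only [Function.comp, Equiv.symm_apply_apply, pattern]
  split_ifs <;> first | omega | simp

lemma exists_perm {n i j : ℕ} {v w : Fin n → SignType} (hv : v ∈ words n i j)
    (hw : w ∈ words n i j) : ∃ τ : Equiv.Perm (Fin n), v ∘ τ = w := by
  have hc : ∀ s, Fintype.card {x // w x = s} = Fintype.card {x // v x = s} := by
    intro s
    rw [Fintype.card_subtype, Fintype.card_subtype, card_filter, card_filter]
    have hv' := mem_words.1 hv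
    have hw' := mem_words.1 hw
    have zv := zeros_eq v
    have zw := zeros_eq w
    rcases s with _ | _ | _
    · change (∑ x, if w x = 0 then 1 else 0) = ∑ x, if v x = 0 then 1 else 0
      omega
    · exact hw'.2.trans hv'.2.symm
    · exact hw'.1.trans hv'.1.symm
  refine ⟨Equiv.ofFiberEquiv fun s => Fintype.equivOfCardEq (hc s), ?_⟩
  funext x
  exact Equiv.ofFiberEquiv_map _ x

lemma card_fiber {n a : ℕ} (h : 2 * a < n) {w : Fin n → SignType} (hw : w ∈ words n a a) :
    (univ.filter fun σ : Equiv.Perm (Fin n) => pattern n a ∘ σ.symm = w).card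
      = (univ.filter fun σ : Equiv.Perm (Fin n) => pattern n a ∘ σ.symm = pattern n a).card := by
  obtain ⟨τ, rfl⟩ := exists_perm (pattern_mem h) hw
  refine card_equiv (Equiv.mulLeft τ) fun σ => ?_
  simp only [mem_filter, mem_univ, true_and, Equiv.coe_mulLeft, funext_iff, Function.comp]
  constructor
  · intro h x
    simpa [Equiv.Perm.mul_def] using h (τ.symm x)
  · intro h x
    simpa [Equiv.Perm.mul_def] using h (τ x)

/-- Every word with `a` letters `+` and `a` letters `-` comes from the same number `K` of
permutations. -/
lemma perm_count {n a : ℕ} (h : 2 * a < n) : ∃ K : ℕ,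
    n.factorial = total n a a * K ∧
    (univ.filter fun σ : Equiv.Perm (Fin n) => D n a a σ = 0).card = count n a a 0 * K := by
  have hmem : ∀ σ : Equiv.Perm (Fin n), pattern n a ∘ σ.symm ∈ words n a a :=
    fun σ => (mem_words_comp _).2 (pattern_mem h)
  refine ⟨(univ.filter fun σ : Equiv.Perm (Fin n) =>
    pattern n a ∘ σ.symm = pattern n a).card, ?_, ?_⟩
  · have h1 : (univ : Finset (Equiv.Perm (Fin n))).card = n.factorial := by
      rw [card_univ, Fintype.card_perm, Fintype.card_fin]
    rw [← h1, card_eq_sum_card_fiberwise (f := fun σ => pattern n a ∘ σ.symm) (t := words n a a)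
      (fun σ _ => hmem σ), sum_congr rfl fun w hw => card_fiber h hw, sum_const, smul_eq_mul, total]
  · rw [card_eq_sum_card_fiberwise (f := fun σ => pattern n a ∘ σ.symm)
      (t := (words n a a).filter fun w => val w = 0)]
    · rw [count, ← smul_eq_mul, ← sum_const]
      refine sum_congr rfl fun w hw => ?_
      rw [mem_filter] at hw
      rw [← card_fiber h hw.1, filter_filter]
      congr 1
      refine filter_congr fun σ _ => ?_
      rw [D_eq_val]
      exact ⟨fun h => h.2, fun h => ⟨by rw [h]; exact hw.2, h⟩⟩
    · intro σ hσ
      simp only [coe_filter, mem_univ, true_and, Set.mem_ofPred_eq, D_eq_val] at hσ ⊢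
      exact ⟨hmem σ, hσ⟩

lemma D_one_ne_zero {n : ℕ} (h : 2 < n) (σ : Equiv.Perm (Fin n)) : D n 1 1 σ ≠ 0 := by
  have h0 : (univ.filter fun i : Fin n => (i : ℕ) < 1) = {⟨0, by omega⟩} := by
    ext i; simp [Fin.ext_iff]
  have h1 : (univ.filter fun i : Fin n => 1 ≤ (i : ℕ) ∧ (i : ℕ) < 1 + 1) = {⟨1, by omega⟩} := by
    ext i; simp [Fin.ext_iff]; omega
  rw [D, h0, h1, sum_singleton, sum_singleton]
  intro h
  have h2 : ((σ ⟨0, by omega⟩ : Fin n) : ℕ) = σ ⟨1, by omega⟩ := by omega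
  have h3 := σ.injective (Fin.ext h2)
  simp [Fin.ext_iff] at h3

end SignedWords

open SignedWords in
/-- For `a ≥ 1` and `n > 2a`, a uniformly random permutation `σ` of `{1,…,n}`
satisfies `D_{a,a}(σ) = 0` with probability at most `1/n`, and the inequality is
strict unless `a = 2` and `n = 5`. -/
theorem prob_D_equal_zero (a n : ℕ) (ha : 1 ≤ a) (hn : 2 * a < n) :
    (((Finset.univ.filter
        (fun σ : Equiv.Perm (Fin n) => D n a a σ = 0)).card : ℚ)
      / (Nat.factorial n : ℚ) ≤ 1 / (n : ℚ)) ∧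
    (¬ (a = 2 ∧ n = 5) →
      ((Finset.univ.filter
          (fun σ : Equiv.Perm (Fin n) => D n a a σ = 0)).card : ℚ)
        / (Nat.factorial n : ℚ) < 1 / (n : ℚ)) := by
  have hn0 : (0 : ℚ) < n := by exact_mod_cast (by omega : 0 < n)
  have hf : (0 : ℚ) < n.factorial := by exact_mod_cast n.factorial_pos
  rcases Nat.lt_or_ge a 2 with h1 | h2
  · obtain rfl : a = 1 := by omega
    have h0 : (Finset.univ.filter fun σ : Equiv.Perm (Fin n) => D n 1 1 σ = 0) = ∅ :=
      Finset.filter_eq_empty_iff.2 fun σ _ => D_one_ne_zero (by omega) σ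
    rw [h0, Finset.card_empty, Nat.cast_zero, zero_div]
    have : 0 < 1 / (n : ℚ) := by positivity
    exact ⟨this.le, fun _ => this⟩
  · obtain ⟨b, rfl⟩ := Nat.exists_eq_add_of_le' h2
    obtain ⟨d, rfl⟩ := Nat.exists_eq_add_of_le (show 2 * b + 5 ≤ n by omega)
    have hT : ∀ d, 0 < total (2 * b + 5 + d) (b + 2) (b + 2) := fun d => by
      obtain ⟨K, hK, -⟩ := perm_count (n := 2 * b + 5 + d) (a := b + 2) (by omega)
      exact Nat.pos_of_mul_pos_right (hK ▸ Nat.factorial_pos _)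
    obtain ⟨K, hK, hN⟩ := perm_count hn
    have hK0 : 0 < K := Nat.pos_of_ne_zero fun h => by
      rw [h, mul_zero] at hK
      exact Nat.factorial_ne_zero _ hK
    obtain ⟨hle, hlt⟩ := count_bound b d hT
    rw [hN, div_le_div_iff₀ hf hn0, div_lt_div_iff₀ hf hn0]
    constructor
    · rw [hK]
      have := Nat.mul_le_mul_right K hle
      norm_cast
      linarith
    · intro h
      have := Nat.mul_lt_mul_of_pos_right (hlt fun h' => h (by omega)) hK0
      rw [hK]
      norm_cast
      linarith
end

section
/- Let a ≥ 1 and n be integers with n > 2a + 1, and let σ be a uniformly random permutation of {1,…,n}. Then the probability that D_{a,a}(σ) = 0 is at most 1/n − 1/(3n(n−1)). -/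
open Finset Equiv

/-- The weighted sum `∑ v, v * s (π v)`: `π` sends a value to its position, `s` is the weight
of a position. -/
def wsum {n : ℕ} (s : Fin n → ℤ) (π : Perm (Fin n)) : ℤ := ∑ v : Fin n, (v : ℤ) * s (π v)

/-- The weights that remain on the other positions, relabelled by `Fin n` as in
`Equiv.Perm.decomposeFin`, once value `0` has been put on position `p`. -/
def rest {n : ℕ} (s : Fin (n + 1) → ℤ) (p : Fin (n + 1)) : Fin n → ℤ :=
  fun v => s (swap 0 p v.succ)

/-- Permutations counted by the position `p` of the value `0`. -/
lemma card_decompose {n : ℕ} (P : Perm (Fin (n + 1)) → Prop) [DecidablePred P] :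
    #{π | P π} = ∑ p, #{e : Perm (Fin n) | P (Perm.decomposeFin.symm (p, e))} := by
  simp only [← Fintype.card_subtype]
  rw [← Fintype.card_sigma]
  refine Fintype.card_congr ?_
  refine ((Perm.decomposeFin.symm.subtypeEquivOfSubtype (p := P)).symm).trans ?_
  exact Equiv.subtypeProdEquivSigmaSubtype (fun p e => P (Perm.decomposeFin.symm (p, e)))

lemma sum_rest {n : ℕ} {M : Type*} [AddCommMonoid M] (s : Fin (n + 1) → ℤ) (p : Fin (n + 1))
    (f : ℤ → M) : f (s p) + ∑ v, f (rest s p v) = ∑ i, f (s i) := by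
  rw [← Equiv.sum_comp (swap 0 p) (fun i => f (s i)), Fin.sum_univ_succ]
  simp [rest]

lemma wsum_decompose {n : ℕ} (s : Fin (n + 1) → ℤ) (p : Fin (n + 1)) (e : Perm (Fin n)) :
    wsum s (Perm.decomposeFin.symm (p, e)) = wsum (rest s p) e + ∑ v, rest s p v := by
  rw [← Equiv.sum_comp e (rest s p)]
  simp only [wsum, Fin.sum_univ_succ, Perm.decomposeFin_symm_apply_succ, rest,
    ← Finset.sum_add_distrib]
  simp [add_mul]

/-- If the weights sum to `±1`, cyclically shifting the values equidistributes `wsum s` modulo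
the number of values, so each residue class is hit with probability `1 / (m + 1)`. -/
lemma card_residue {m : ℕ} (s : Fin (m + 1) → ℤ) (hs : IsUnit (∑ v, s v)) (t : ℤ) :
    (m + 1) * #{e | ((m + 1 : ℕ) : ℤ) ∣ wsum s e - t} ≤ (m + 1).factorial := by
  have key : ∀ (k : Fin (m + 1)) (e : Perm (Fin (m + 1))),
      ((wsum s (e * Equiv.addRight k) : ℤ) : ZMod (m + 1)) =
        (wsum s e : ZMod (m + 1)) - (k : ℕ) * ((∑ v, s v : ℤ) : ZMod (m + 1)) := by
    intro k e
    have hc : ∀ v : Fin (m + 1), (((v : ℕ) : ℤ) : ZMod (m + 1))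
        = (((v + k : Fin (m + 1)) : ℕ) : ZMod (m + 1)) - ((k : ℕ) : ZMod (m + 1)) := by
      intro v
      rw [Fin.val_add, ZMod.natCast_mod]
      push_cast
      ring
    rw [← Equiv.sum_comp e s]
    simp only [wsum]
    push_cast
    rw [Finset.mul_sum, ← Finset.sum_sub_distrib,
      ← Equiv.sum_comp (Equiv.addRight k) (fun v : Fin (m + 1) =>
        ((v : ℕ) : ZMod (m + 1)) * ((s (e v) : ℤ) : ZMod (m + 1)) - (k : ℕ) * (s (e v) : ℤ))]
    refine Finset.sum_congr rfl fun v _ => ?_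
    have := hc v
    push_cast at this
    rw [this]
    simp [sub_mul]
  have hdiv : ∀ e, (((m + 1 : ℕ) : ℤ) ∣ wsum s e - t) ↔
      ((wsum s e : ℤ) : ZMod (m + 1)) = (t : ZMod (m + 1)) := by
    intro e
    rw [← ZMod.intCast_zmod_eq_zero_iff_dvd, Int.cast_sub, sub_eq_zero]
  simp only [hdiv]
  have hcard : #((univ : Finset (Fin (m + 1))) ×ˢ
      ({e | ((wsum s e : ℤ) : ZMod (m + 1)) = (t : ZMod (m + 1))} :
        Finset (Perm (Fin (m + 1))))) ≤ #(univ : Finset (Perm (Fin (m + 1)))) := by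
    refine Finset.card_le_card_of_injOn (fun x => x.2 * Equiv.addRight x.1) (by simp) ?_
    rintro ⟨k, e⟩ h ⟨k', e'⟩ h' heq
    simp only [coe_product, coe_univ, coe_filter, mem_univ, true_and, Set.mem_prod,
      Set.mem_univ, Set.mem_ofPred_eq] at h h' heq
    have h1 := key k e
    rw [heq, key k' e', h, h'] at h1
    have hu : IsUnit ((∑ v, s v : ℤ) : ZMod (m + 1)) := hs.map (Int.castRingHom _)
    have h2 : ((k' : ℕ) : ZMod (m + 1)) = ((k : ℕ) : ZMod (m + 1)) :=
      hu.mul_right_cancel (sub_right_injective h1)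
    have h3 : k' = k := by
      rw [ZMod.natCast_eq_natCast_iff'] at h2
      rw [Nat.mod_eq_of_lt k'.2, Nat.mod_eq_of_lt k.2] at h2
      exact Fin.ext h2
    subst h3
    simpa using heq
  simpa [Finset.card_product, Fintype.card_perm] using hcard

/-- The number of positions with nonzero weight. -/
def supp {n : ℕ} (s : Fin n → ℤ) : ℕ := #{i | s i ≠ 0}

lemma supp_rest {n : ℕ} (s : Fin (n + 1) → ℤ) (p : Fin (n + 1)) (hp : s p = 0) :
    supp (rest s p) = supp s := by
  have := sum_rest s p (fun x => if x ≠ 0 then 1 else 0)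
  simpa [supp, Finset.card_filter, hp] using this

lemma isUnit_of_trit {x : ℤ} (h : x = -1 ∨ x = 0 ∨ x = 1) (h0 : x ≠ 0) : IsUnit x := by
  rw [Int.isUnit_iff]; tauto

/-- With value `0` on a position of nonzero weight, the remaining weights sum to `±1`, so
divisibility of `wsum` by the number of remaining values has probability `1 / (m + 1)`. -/
lemma card_head {m : ℕ} (s : Fin (m + 2) → ℤ) (hs : ∀ i, s i = -1 ∨ s i = 0 ∨ s i = 1)
    (h0 : ∑ i, s i = 0) :
    #{π | s (π 0) ≠ 0 ∧ ((m + 1 : ℕ) : ℤ) ∣ wsum s π} ≤ supp s * m.factorial := by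
  rw [card_decompose, supp, Finset.card_filter, Finset.sum_mul]
  refine Finset.sum_le_sum fun p _ => ?_
  simp only [Perm.decomposeFin_symm_apply_zero, wsum_decompose]
  by_cases hp : s p = 0
  · simp [hp]
  · have hsum := sum_rest s p id
    simp only [id, h0] at hsum
    have := card_residue (rest s p)
      (by rw [show ∑ v, rest s p v = -s p by linarith, IsUnit.neg_iff]
          exact isUnit_of_trit (hs p) hp) (-∑ v, rest s p v)
    rw [Nat.factorial_succ] at this
    simpa [hp] using Nat.le_of_mul_le_mul_left this (Nat.succ_pos m)

/-- The reflection `v ↦ m + 2 - v` of the values `1, …, m + 1`, fixing the value `0`. -/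
def refl0 (m : ℕ) : Perm (Fin (m + 2)) := Perm.decomposeFin.symm (0, Fin.revPerm)

lemma wsum_refl {m : ℕ} (s : Fin (m + 2) → ℤ) (h0 : ∑ i, s i = 0) (π : Perm (Fin (m + 2))) :
    wsum s (π * refl0 m) = -(m + 2) * s (π 0) - wsum s π := by
  rw [← Equiv.sum_comp π, Fin.sum_univ_succ] at h0
  have h1 : wsum s (π * refl0 m)
      = ∑ v : Fin (m + 1), ((m : ℤ) + 1 - v) * s (π v.succ) := by
    rw [← Equiv.sum_comp Fin.revPerm
      (fun v : Fin (m + 1) => ((m : ℤ) + 1 - v) * s (π v.succ))]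
    simp only [wsum, Fin.sum_univ_succ (n := m + 1)]
    simp only [Fin.val_zero, Nat.cast_zero, zero_mul, zero_add, Perm.mul_apply, refl0,
      Perm.decomposeFin_symm_apply_succ, swap_self, Equiv.refl_apply]
    refine Finset.sum_congr rfl fun v _ => ?_
    congr 1
    have := v.2
    simp only [Fin.val_succ, Fin.revPerm_apply, Fin.val_rev]
    omega
  have h2 : wsum s π = ∑ v : Fin (m + 1), ((v : ℤ) + 1) * s (π v.succ) := by
    simp [wsum, Fin.sum_univ_succ (n := m + 1)]
  have h3 : wsum s (π * refl0 m) + wsum s π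
      = (m + 2) * ∑ v : Fin (m + 1), s (π v.succ) := by
    rw [h1, h2, ← Finset.sum_add_distrib, Finset.mul_sum]
    exact Finset.sum_congr rfl fun v _ => by ring
  rw [show ∑ v : Fin (m + 1), s (π v.succ) = -s (π 0) by linarith] at h3
  linarith

lemma wsum_swap {m : ℕ} (s : Fin (m + 2) → ℤ) (π : Perm (Fin (m + 2))) :
    wsum s (π * swap 0 1) = wsum s π + s (π 0) - s (π 1) := by
  simp only [wsum, Fin.sum_univ_succ, Perm.mul_apply]
  have : ∀ v : Fin m, swap (0 : Fin (m + 2)) 1 v.succ.succ = v.succ.succ := fun v =>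
    swap_apply_of_ne_of_ne (Fin.succ_ne_zero _)
      (by rw [← Fin.succ_zero_eq_one]; exact fun h => Fin.succ_ne_zero _ (Fin.succ_injective _ h))
  simp [this]
  ring

/-- The zeros of `wsum s` in which one of the two extreme values `0`, `1` carries nonzero weight.
If `0` has weight zero but `1` does not, exchanging `0` and `1` and then reflecting `1, …, m + 1`
leads to an arrangement in which `0` carries weight `ε ≠ 0` and `wsum` is `-(m + 1) * ε`: again
divisible by `m + 1`, but nonzero. So both kinds of zeros fit disjointly in `card_head`. -/
lemma card_extreme {m : ℕ} (s : Fin (m + 2) → ℤ) (hs : ∀ i, s i = -1 ∨ s i = 0 ∨ s i = 1)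
    (h0 : ∑ i, s i = 0) :
    #{π | wsum s π = 0 ∧ ¬ (s (π 0) = 0 ∧ s (π 1) = 0)} ≤ supp s * m.factorial := by
  refine le_trans ?_ (card_head s hs h0)
  refine Finset.card_le_card_of_injOn
    (fun π => if s (π 0) = 0 then π * swap 0 1 * refl0 m else π) ?_ ?_
  · intro π hπ
    simp only [coe_filter, mem_univ, true_and, Set.mem_ofPred_eq] at hπ ⊢
    split_ifs with h
    · have : s (π 1) ≠ 0 := fun h' => hπ.2 ⟨h, h'⟩
      refine ⟨by simpa [refl0] using this, -s (π 1), ?_⟩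
      rw [wsum_refl s h0, wsum_swap, hπ.1, h]
      simp
      ring
    · exact ⟨h, by simp [hπ.1]⟩
  · have hne : ∀ π, wsum s π = 0 → s (π 0) = 0 → s (π 1) ≠ 0 →
        wsum s (π * swap 0 1 * refl0 m) ≠ 0 := by
      intro π h h1 h2
      rw [wsum_refl s h0, wsum_swap, h, h1]
      have : -((m : ℤ) + 2) * s ((π * swap 0 1 : Perm (Fin (m + 2))) 0) - (0 + 0 - s (π 1))
          = -(m + 1) * s (π 1) := by simp; ring
      rw [this]
      exact mul_ne_zero (by omega) h2
    intro π hπ π' hπ' heq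
    simp only [coe_filter, mem_univ, true_and, Set.mem_ofPred_eq] at hπ hπ' heq
    split_ifs at heq with h h' h'
    · simpa using heq
    · exact absurd (heq ▸ hπ'.1) (hne π hπ.1 h fun h2 => hπ.2 ⟨h, h2⟩)
    · exact absurd (heq ▸ hπ.1) (hne π' hπ'.1 h' fun h2 => hπ'.2 ⟨h', h2⟩)
    · exact heq

lemma card_zero_weight {n : ℕ} (s : Fin n → ℤ) : #{i | s i = 0} = n - supp s := by
  have := Finset.card_filter_add_card_filter_not (s := (univ : Finset (Fin n))) (fun i => s i = 0)
  simp only [supp, card_univ, Fintype.card_fin, ne_eq] at this ⊢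
  omega

lemma supp_le {n : ℕ} (s : Fin n → ℤ) : supp s ≤ n := by
  simpa [supp] using Finset.card_le_univ (univ.filter fun i => s i ≠ 0)

/-- The number of arrangements with vanishing weighted sum. -/
def zeros {n : ℕ} (s : Fin n → ℤ) : ℕ := #{π | wsum s π = 0}

/-- Zeros of `wsum s` with value `0` on a position of weight zero, counted by that position. -/
lemma card_zero_step {n : ℕ} (s : Fin (n + 1) → ℤ) (h0 : ∑ i, s i = 0)
    (P : (p : Fin (n + 1)) → Perm (Fin n) → Prop) [∀ p, DecidablePred (P p)] (M : ℕ)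
    (hM : ∀ p, s p = 0 → #{e | wsum (rest s p) e = 0 ∧ P p e} ≤ M) :
    ∑ p, #{e | wsum s (Perm.decomposeFin.symm (p, e)) = 0 ∧ s p = 0 ∧ P p e}
      ≤ (n + 1 - supp s) * M := by
  rw [← card_zero_weight, Finset.card_filter, Finset.sum_mul]
  refine Finset.sum_le_sum fun p _ => ?_
  by_cases hp : s p = 0
  · have hsum := sum_rest s p id
    simp only [id, h0, hp, zero_add] at hsum
    simpa [hp, wsum_decompose, hsum] using hM p hp
  · simp [hp]

/-- The recursion on the number of values: either an extreme value carries nonzero weight, or both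
`0` and `1` sit on positions of weight zero and can be deleted. -/
lemma zeros_le {m : ℕ} (s : Fin (m + 2) → ℤ) (hs : ∀ i, s i = -1 ∨ s i = 0 ∨ s i = 1)
    (h0 : ∑ i, s i = 0) (M : ℕ)
    (hM : ∀ s' : Fin m → ℤ, (∀ i, s' i = -1 ∨ s' i = 0 ∨ s' i = 1) → ∑ i, s' i = 0 →
      supp s' = supp s → zeros s' ≤ M) :
    zeros s ≤ supp s * m.factorial + (m + 2 - supp s) * ((m + 1 - supp s) * M) := by
  have hsplit := Finset.card_filter_add_card_filter_not
    (s := (univ : Finset (Perm (Fin (m + 2)))).filter fun π => wsum s π = 0)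
    (fun π => s (π 0) = 0 ∧ s (π 1) = 0)
  rw [Finset.filter_filter, Finset.filter_filter] at hsplit
  rw [zeros, ← hsplit, add_comm]
  refine add_le_add (card_extreme s hs h0) ?_
  rw [card_decompose]
  have h1 : ∀ (p : Fin (m + 2)) (e : Perm (Fin (m + 1))),
      s (Perm.decomposeFin.symm (p, e) 1) = rest s p (e 0) := by
    intro p e
    rw [← Fin.succ_zero_eq_one, Perm.decomposeFin_symm_apply_succ, rest]
  simp only [Perm.decomposeFin_symm_apply_zero, h1]
  refine card_zero_step s h0 (fun p e => rest s p (e 0) = 0) _ fun p hp => ?_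
  have hr0 : ∑ v, rest s p v = 0 := by
    have hsum := sum_rest s p id
    simpa only [id, h0, hp, zero_add] using hsum
  rw [card_decompose, ← supp_rest s p hp]
  simp only [Perm.decomposeFin_symm_apply_zero]
  have := card_zero_step (rest s p) hr0 (fun _ _ => True) M fun q hq => by
    have hsum := sum_rest (rest s p) q id
    simp only [id, hr0, hq, zero_add] at hsum
    simpa [zeros] using hM (rest (rest s p) q) (fun i => hs _) hsum
      (by rw [supp_rest _ _ hq, supp_rest _ _ hp])
  simpa using this

/-- The recursion `zeros_le` closed up with the crude bound `zeros ≤ n! / (n - 1)`, which it also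
reproduces. The factor `M` is an upper bound for the number of zeros on `m` values. -/
lemma zeros_bound (m : ℕ) (s : Fin (m + 2) → ℤ) (hs : ∀ i, s i = -1 ∨ s i = 0 ∨ s i = 1)
    (h0 : ∑ i, s i = 0) (hk : 4 ≤ supp s) :
    ∃ M, (m - 1) * M ≤ m.factorial ∧
      zeros s ≤ supp s * m.factorial + (m + 2 - supp s) * ((m + 1 - supp s) * M) := by
  induction m using Nat.strong_induction_on with
  | _ m ih =>
  have hm := supp_le s
  have hm1 : 0 < m - 1 := by omega
  refine ⟨m.factorial / (m - 1), Nat.mul_div_le _ _, zeros_le s hs h0 _ fun s' hs' h0' hk' => ?_⟩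
  have hm' := supp_le s'
  obtain ⟨l, rfl⟩ : ∃ l, m = l + 2 := ⟨m - 2, by omega⟩
  obtain ⟨M, hM, hz⟩ := ih l (by omega) s' hs' h0' (by omega)
  rw [Nat.le_div_iff_mul_le hm1]
  have hz2 : zeros s' ≤ (l + 2) * l.factorial := by
    calc zeros s' ≤ supp s' * l.factorial + (l + 2 - supp s') * ((l + 1 - supp s') * M) := hz
      _ ≤ supp s' * l.factorial + (l + 2 - supp s') * ((l - 1) * M) := by
          have : l + 1 - supp s' ≤ l - 1 := by omega
          gcongr
      _ ≤ supp s' * l.factorial + (l + 2 - supp s') * l.factorial := by gcongr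
      _ = (l + 2) * l.factorial := by rw [← add_mul]; congr 1; omega
  calc zeros s' * (l + 2 - 1) ≤ (l + 2) * l.factorial * (l + 1) := Nat.mul_le_mul_right _ hz2
    _ = (l + 2).factorial := by rw [Nat.factorial_succ, Nat.factorial_succ]; ring

/-- The claimed bound with denominators cleared, `n = m + 2`. With `c = d + 2` weight-zero positions,
`m - 1 ≥ c + 1` and `3 * c * (c - 1) ≤ (3 * c - 4) * (c + 1)`. -/
lemma zeros_final (m : ℕ) (s : Fin (m + 2) → ℤ) (hs : ∀ i, s i = -1 ∨ s i = 0 ∨ s i = 1)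
    (h0 : ∑ i, s i = 0) (hk : 4 ≤ supp s) (hc : supp s ≤ m) :
    3 * zeros s ≤ (3 * m + 2) * m.factorial := by
  obtain ⟨M, hM, hz⟩ := zeros_bound m s hs h0 hk
  generalize supp s = K at *
  -- `d + 2` is the number of positions of weight zero
  obtain ⟨d, rfl⟩ := Nat.exists_eq_add_of_le hc
  rw [show K + d + 2 - K = d + 2 by omega, show K + d + 1 - K = d + 1 by omega] at hz
  have h1 : (d + 3) * M ≤ (K + d).factorial := le_trans (by gcongr; omega) hM
  nlinarith [Nat.zero_le (d * M)]

/-- The weights of `D_{a,a}`. -/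
def wt (n a : ℕ) (i : Fin n) : ℤ :=
  (if (i : ℕ) < a then 1 else 0) - (if a ≤ (i : ℕ) ∧ (i : ℕ) < a + a then 1 else 0)

lemma card_low (n a : ℕ) (h : a ≤ n) : #{i : Fin n | (i : ℕ) < a} = a := by
  rw [Fin.card_filter_val_lt]; omega

lemma card_mid (n a : ℕ) (h : a + a ≤ n) :
    #{i : Fin n | a ≤ (i : ℕ) ∧ (i : ℕ) < a + a} = a := by
  have h1 := card_low n (a + a) h
  have h2 := card_low n a (by omega)
  have h3 := Finset.card_filter_add_card_filter_not
    (s := (univ : Finset (Fin n)).filter fun i : Fin n => (i : ℕ) < a + a) (fun i => (i : ℕ) < a)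
  rw [Finset.filter_filter, Finset.filter_filter, h1] at h3
  have e1 : #{i : Fin n | (i : ℕ) < a + a ∧ (i : ℕ) < a} = a := by
    convert h2 using 4; omega
  have e2 : #{i : Fin n | (i : ℕ) < a + a ∧ ¬ (i : ℕ) < a}
      = #{i : Fin n | a ≤ (i : ℕ) ∧ (i : ℕ) < a + a} := by
    congr 1; ext i; simp; omega
  omega

lemma sum_wt (n a : ℕ) (h : a + a ≤ n) : ∑ i, wt n a i = 0 := by
  simp only [wt, Finset.sum_sub_distrib, Finset.sum_boole, card_low n a (by omega), card_mid n a h,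
    sub_self]

lemma supp_wt (n a : ℕ) (h : a + a ≤ n) : supp (wt n a) = a + a := by
  have hiff : ∀ i : Fin n, wt n a i ≠ 0 ↔ (i : ℕ) < a + a := by
    intro i
    simp only [wt]
    split_ifs <;> simp <;> omega
  simp only [supp, hiff, card_low n (a + a) h]

lemma D_eq (n a : ℕ) (h : a + a ≤ n) (σ : Perm (Fin n)) : D n a a σ = wsum (wt n a) σ⁻¹ := by
  have h1 : wsum (wt n a) σ⁻¹ = ∑ i, ((σ i : ℕ) : ℤ) * wt n a i := by
    rw [wsum, ← Equiv.sum_comp σ]; simp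
  have h2 : ∑ i, ((σ i : ℕ) : ℤ) * wt n a i = ∑ i, (((σ i : ℕ) : ℤ) + 1) * wt n a i := by
    simp only [add_mul, Finset.sum_add_distrib, one_mul, sum_wt n a h, add_zero]
  rw [h1, h2, D, Finset.sum_filter, Finset.sum_filter, ← Finset.sum_sub_distrib]
  refine Finset.sum_congr rfl fun i _ => ?_
  simp only [wt, mul_sub, mul_ite, mul_one, mul_zero]

lemma card_D (n a : ℕ) (h : a + a ≤ n) : #{σ | D n a a σ = 0} = zeros (wt n a) := by
  simp only [zeros, D_eq n a h, ← Fintype.card_subtype]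
  exact Fintype.card_congr ((Equiv.inv (Perm (Fin n))).subtypeEquiv fun σ => by simp)

lemma D_one_ne (n : ℕ) (h : 2 ≤ n) (σ : Perm (Fin n)) : D n 1 1 σ ≠ 0 := by
  obtain ⟨m, rfl⟩ := Nat.exists_eq_add_of_le' h
  have h0 : (univ.filter fun i : Fin (m + 2) => (i : ℕ) < 1) = {0} := by
    ext i; simp only [mem_filter, mem_univ, true_and, mem_singleton, Fin.ext_iff, Fin.val_zero]
    omega
  have h1 : (univ.filter fun i : Fin (m + 2) => 1 ≤ (i : ℕ) ∧ (i : ℕ) < 1 + 1) = {1} := by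
    ext i; simp only [mem_filter, mem_univ, true_and, mem_singleton, Fin.ext_iff, Fin.val_one]
    omega
  rw [D, h0, h1, Finset.sum_singleton, Finset.sum_singleton]
  intro h
  have : σ 0 = σ 1 := Fin.ext (by omega)
  simpa using σ.injective this

/-- For `a ≥ 1` and `n > 2a + 1`, a uniformly random permutation `σ` of `{1,…,n}`
satisfies `D_{a,a}(σ) = 0` with probability at most `1/n − 1/(3n(n−1))`. -/
theorem prob_D_equal_zero_strong (a n : ℕ) (ha : 1 ≤ a) (hn : 2 * a + 1 < n) :
    ((Finset.univ.filter
        (fun σ : Equiv.Perm (Fin n) => D n a a σ = 0)).card : ℚ)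
      / (Nat.factorial n : ℚ)
      ≤ 1 / (n : ℚ) - 1 / (3 * (n : ℚ) * ((n : ℚ) - 1)) := by
  obtain ⟨m, rfl⟩ : ∃ m, n = m + 2 := ⟨n - 2, by omega⟩
  have hcount : 3 * #{σ | D (m + 2) a a σ = 0} ≤ (3 * m + 2) * m.factorial := by
    obtain rfl | ha2 := ha.eq_or_lt
    · simp [D_one_ne]
    · have hK := supp_wt (m + 2) a (by omega)
      rw [card_D (m + 2) a (by omega)]
      refine zeros_final m _ (fun i => ?_) (sum_wt _ _ (by omega)) (by omega) (by omega)
      simp only [wt]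
      split_ifs <;> simp
  have hq : (3 : ℚ) * (#{σ | D (m + 2) a a σ = 0} : ℕ) ≤ (3 * m + 2) * (m.factorial : ℚ) := by
    exact_mod_cast hcount
  have hf : ((m + 2).factorial : ℚ) = (m + 2) * (m + 1) * m.factorial := by
    rw [Nat.factorial_succ, Nat.factorial_succ]; push_cast; ring
  have hpos : (0 : ℚ) < m.factorial := by exact_mod_cast m.factorial_pos
  have hrhs : 1 / ((m + 2 : ℕ) : ℚ) - 1 / (3 * ((m + 2 : ℕ) : ℚ) * (((m + 2 : ℕ) : ℚ) - 1))
      = (3 * m + 2) / (3 * (m + 2) * (m + 1)) := by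
    push_cast
    rw [show (m : ℚ) + 2 - 1 = m + 1 by ring]
    field_simp
    ring
  rw [hrhs, hf, div_le_div_iff₀ (by positivity) (by positivity)]
  nlinarith [mul_le_mul_of_nonneg_left hq (show (0 : ℚ) ≤ (m + 2) * (m + 1) by positivity)]
end

section
/- Let a > b ≥ 1 be integers with a + b < n, and let σ be a uniformly random permutation of {1,…,n}. Then the probability that D_{a,b}(σ) = 0 is at most 1/(2(n−a−b+1)). -/
/-- The coefficient of `σ i` in `D n a b σ`. -/
def coeffD (a b i : ℕ) : ℤ := if i < a then 1 else if i < a + b then -1 else 0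

/-- The coefficient of `σ i` in `T n a b σ`: as in `D`, but zero on the first `a - b` positions. -/
def coeffT (a b i : ℕ) : ℤ := if i < a - b then 0 else coeffD a b i

/-- The part of `D` that is antisymmetric under exchanging the positions `[a - b, a)` and
`[a, a + b)`. -/
def T (n a b : ℕ) (σ : Equiv.Perm (Fin n)) : ℤ :=
  ∑ i : Fin n, coeffT a b i * ((σ i : ℕ) + 1 : ℤ)

lemma D_eq_sum (n a b : ℕ) (σ : Equiv.Perm (Fin n)) :
    D n a b σ = ∑ i : Fin n, coeffD a b i * ((σ i : ℕ) + 1 : ℤ) := by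
  unfold D
  rw [Finset.sum_filter, Finset.sum_filter, ← Finset.sum_sub_distrib]
  refine Finset.sum_congr rfl fun i _ => ?_
  unfold coeffD
  split_ifs <;> omega

lemma T_neg {n a b : ℕ} (hab : b < a) (hn : a + b < n) {σ : Equiv.Perm (Fin n)}
    (h : D n a b σ = 0) : T n a b σ < 0 := by
  have key : 0 < D n a b σ - T n a b σ := by
    rw [D_eq_sum, T, ← Finset.sum_sub_distrib]
    refine Finset.sum_pos' (fun i _ => ?_) ⟨⟨0, by omega⟩, Finset.mem_univ _, ?_⟩
    · unfold coeffT coeffD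
      split_ifs <;> omega
    · have h1 : 0 < a - b := by omega
      have h2 : 0 < a := by omega
      simp only [coeffT, coeffD, h1, h2, if_true]
      omega
  omega

/-- The involution of the positions exchanging the blocks `[a - b, a)` and `[a, a + b)`, as a
function on `ℕ`. -/
def blockIdx (a b i : ℕ) : ℕ :=
  if a - b ≤ i ∧ i < a then i + b else if a ≤ i ∧ i < a + b then i - b else i

lemma blockIdx_lt {n a b i : ℕ} (hn : a + b < n) (hi : i < n) : blockIdx a b i < n := by
  unfold blockIdx
  split_ifs <;> omega

lemma blockIdx_blockIdx {a b : ℕ} (hab : b < a) (i : ℕ) : blockIdx a b (blockIdx a b i) = i := by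
  unfold blockIdx
  split_ifs <;> omega

/-- `blockIdx` as a permutation of the positions. -/
def blockSwap (n a b : ℕ) (hab : b < a) (hn : a + b < n) : Equiv.Perm (Fin n) :=
  Function.Involutive.toPerm (fun i : Fin n => ⟨blockIdx a b i, blockIdx_lt hn i.2⟩)
    (fun i => Fin.ext (blockIdx_blockIdx hab i))

lemma coeffT_blockSwap {n a b : ℕ} (hab : b < a) (hn : a + b < n) (i : Fin n) :
    coeffT a b (blockSwap n a b hab hn i) = - coeffT a b i := by
  change coeffT a b (blockIdx a b i) = _
  unfold coeffT coeffD blockIdx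
  split_ifs <;> omega

lemma T_mul_blockSwap {n a b : ℕ} (hab : b < a) (hn : a + b < n) (σ : Equiv.Perm (Fin n)) :
    T n a b (σ * blockSwap n a b hab hn) = - T n a b σ := by
  unfold T
  rw [← Equiv.sum_comp (blockSwap n a b hab hn) (fun i => coeffT a b i * ((σ i : ℕ) + 1 : ℤ)),
    ← Finset.sum_neg_distrib]
  refine Finset.sum_congr rfl fun i _ => ?_
  rw [coeffT_blockSwap hab, Equiv.Perm.mul_apply]
  ring

/-- Position `0` together with the positions that do not occur in `D`. -/
def freePos (n a b : ℕ) (hn : a + b < n) : Finset (Fin n) :=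
  insert ⟨0, by omega⟩ (Finset.Ici ⟨a + b, hn⟩)

lemma card_freePos {n a b : ℕ} (hab : b < a) (hn : a + b < n) :
    (freePos n a b hn).card = n - (a + b) + 1 := by
  unfold freePos
  rw [Finset.card_insert_of_notMem, Fin.card_Ici]
  simp only [Finset.mem_Ici, Fin.le_def]
  omega

lemma mem_freePos {n a b : ℕ} (hn : a + b < n) (i : Fin n) :
    i ∈ freePos n a b hn ↔ (i : ℕ) = 0 ∨ a + b ≤ (i : ℕ) := by
  simp [freePos, Fin.ext_iff, Fin.le_def]

lemma swap_eq_self {n a b : ℕ} (hn : a + b < n) {u i : Fin n} (hu : u ∈ freePos n a b hn)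
    (hi : i ∉ freePos n a b hn) : Equiv.swap ⟨0, by omega⟩ u i = i := by
  apply Equiv.swap_apply_of_ne_of_ne
  · rintro rfl
    exact hi ((mem_freePos hn _).2 (Or.inl rfl))
  · rintro rfl
    exact hi hu

lemma T_mul_swap {n a b : ℕ} (hab : b < a) (hn : a + b < n) (σ : Equiv.Perm (Fin n)) {u : Fin n}
    (hu : u ∈ freePos n a b hn) :
    T n a b (σ * Equiv.swap ⟨0, by omega⟩ u) = T n a b σ := by
  unfold T
  refine Finset.sum_congr rfl fun i _ => ?_
  by_cases hi : i ∈ freePos n a b hn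
  · have h0 : coeffT a b i = 0 := by
      rw [mem_freePos] at hi
      unfold coeffT coeffD
      split_ifs <;> omega
    rw [h0, zero_mul, zero_mul]
  · rw [Equiv.Perm.mul_apply, swap_eq_self hn hu hi]

/-- The equation `D σ = 0` determines `σ 0` from the values at the other positions occurring
in `D`. -/
lemma apply_zero_eq {n a b : ℕ} (hab : b < a) (hn : a + b < n) {σ σ' : Equiv.Perm (Fin n)}
    (h : D n a b σ = 0) (h' : D n a b σ' = 0)
    (heq : ∀ i, i ∉ freePos n a b hn → σ i = σ' i) :
    σ ⟨0, by omega⟩ = σ' ⟨0, by omega⟩ := by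
  have hsum : D n a b σ - D n a b σ' =
      coeffD a b 0 * ((σ ⟨0, by omega⟩ : ℕ) + 1 : ℤ)
        - coeffD a b 0 * ((σ' ⟨0, by omega⟩ : ℕ) + 1 : ℤ) := by
    rw [D_eq_sum, D_eq_sum, ← Finset.sum_sub_distrib]
    refine Finset.sum_eq_single (⟨0, by omega⟩ : Fin n) (fun i _ hi => ?_) (by simp)
    by_cases hf : i ∈ freePos n a b hn
    · have h0 : coeffD a b i = 0 := by
        rw [mem_freePos] at hf
        rw [Ne, Fin.ext_iff] at hi
        simp only at hi
        unfold coeffD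
        split_ifs <;> omega
      simp [h0]
    · rw [heq i hf, sub_self]
  have h2 : coeffD a b 0 = 1 := if_pos (by omega)
  rw [h, h', h2] at hsum
  ext
  omega

/-- `σ` and `u` can be recovered from `σ * swap 0 u` when `D σ = 0`. -/
lemma swap_injective {n a b : ℕ} (hab : b < a) (hn : a + b < n) {σ σ' : Equiv.Perm (Fin n)}
    {u u' : Fin n} (h : D n a b σ = 0) (h' : D n a b σ' = 0)
    (hu : u ∈ freePos n a b hn) (hu' : u' ∈ freePos n a b hn)
    (heq : σ * Equiv.swap ⟨0, by omega⟩ u = σ' * Equiv.swap ⟨0, by omega⟩ u') :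
    σ = σ' ∧ u = u' := by
  have h0 := apply_zero_eq hab hn h h' fun i hi => by
    have := congrArg (fun ρ : Equiv.Perm (Fin n) => ρ i) heq
    simpa only [Equiv.Perm.mul_apply, swap_eq_self hn hu hi, swap_eq_self hn hu' hi] using this
  have huu : u = u' := by
    apply (σ * Equiv.swap ⟨0, by omega⟩ u).injective
    rw [Equiv.Perm.mul_apply, Equiv.swap_apply_right, heq, Equiv.Perm.mul_apply,
      Equiv.swap_apply_right, h0]
  subst huu
  exact ⟨mul_right_cancel heq, rfl⟩

lemma card_mul_le {n a b : ℕ} (hab : b < a) (hn : a + b < n) :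
    (Finset.univ.filter (fun σ : Equiv.Perm (Fin n) => D n a b σ = 0)).card
      * ((n - (a + b) + 1) * 2) ≤ n.factorial := by
  have hcard : (Finset.univ : Finset (Equiv.Perm (Fin n))).card = n.factorial := by
    rw [Finset.card_univ, Fintype.card_perm, Fintype.card_fin]
  rw [← hcard, ← card_freePos hab hn, ← Fintype.card_bool, ← Finset.card_univ (α := Bool),
    ← Finset.card_product, ← Finset.card_product]
  refine Finset.card_le_card_of_injOn
    (fun p => p.1 * Equiv.swap ⟨0, by omega⟩ p.2.1 * (if p.2.2 then blockSwap n a b hab hn else 1))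
    (fun _ _ => Finset.mem_coe.2 (Finset.mem_univ _)) ?_
  rintro ⟨σ, u, ε⟩ hp ⟨σ', u', ε'⟩ hp' heq
  simp only [Finset.coe_product, Set.mem_prod, Finset.mem_coe, Finset.mem_filter,
    Finset.mem_univ, true_and, and_true] at hp hp'
  obtain ⟨h, hu⟩ := hp
  obtain ⟨h', hu'⟩ := hp'
  have hT := congrArg (T n a b) heq
  have hneg := T_neg hab hn h
  have hneg' := T_neg hab hn h'
  have hε : ε = ε' := by
    cases ε <;> cases ε' <;>
      simp [T_mul_blockSwap hab hn, T_mul_swap hab hn _ hu, T_mul_swap hab hn _ hu'] at hT ⊢ <;>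
      omega
  subst hε
  obtain ⟨rfl, rfl⟩ := swap_injective hab hn h h' hu hu' (mul_right_cancel heq)
  rfl

/-- For `a > b ≥ 1` with `a + b < n`, a uniformly random permutation `σ` of `{1,…,n}`
satisfies `D_{a,b}(σ) = 0` with probability at most `1/(2(n−a−b+1))`. -/
theorem prob_D_diff_easy (a b n : ℕ) (hb : 1 ≤ b) (hab : b < a) (hn : a + b < n) :
    ((Finset.univ.filter
        (fun σ : Equiv.Perm (Fin n) => D n a b σ = 0)).card : ℚ)
      / (Nat.factorial n : ℚ)
      ≤ 1 / (2 * ((n : ℚ) - (a : ℚ) - (b : ℚ) + 1)) := by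
  have key := card_mul_le hab hn
  have hn' : (a : ℚ) + b < n := by exact_mod_cast hn
  have hf : (0 : ℚ) < n.factorial := by exact_mod_cast n.factorial_pos
  generalize (Finset.univ.filter (fun σ : Equiv.Perm (Fin n) => D n a b σ = 0)).card = c at key ⊢
  qify [hn.le] at key
  rw [div_le_div_iff₀ hf (by linarith)]
  linarith
end

section
/- Let a and n be integers with 1 < a < n − 1, and let σ be a uniformly random permutation of {1,…,n}. Then the probability that D_{a,1}(σ) = 0 is at most n/(2(n−1)(a+1)). -/
open Finset

/-- The sum of the first `a` values (in the convention where values lie in `{1, …, n}`). -/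
def headSum (n a : ℕ) (σ : Equiv.Perm (Fin n)) : ℤ :=
  ∑ i ∈ Finset.univ.filter (fun i : Fin n => (i : ℕ) < a), ((σ i : ℕ) + 1 : ℤ)

lemma D_one_eq (n : ℕ) (k : Fin n) (σ : Equiv.Perm (Fin n)) :
    D n k 1 σ = headSum n k σ - ((σ k : ℕ) + 1) := by
  have h : Finset.univ.filter (fun i : Fin n => (k : ℕ) ≤ (i : ℕ) ∧ (i : ℕ) < k + 1) = {k} := by
    ext i
    simp only [mem_filter, mem_univ, true_and, mem_singleton, Fin.ext_iff]
    omega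
  rw [D, h, sum_singleton, headSum]

lemma pair_le_headSum {n a : ℕ} (σ : Equiv.Perm (Fin n)) {i j : Fin n} (hi : (i : ℕ) < a)
    (hj : (j : ℕ) < a) (hij : i ≠ j) :
    ((σ i : ℕ) + 1 : ℤ) + ((σ j : ℕ) + 1) ≤ headSum n a σ := by
  rw [← Finset.sum_pair (f := fun i => ((σ i : ℕ) + 1 : ℤ)) hij]
  apply Finset.sum_le_sum_of_subset_of_nonneg
  · intro x hx
    simp only [mem_insert, mem_singleton] at hx
    rcases hx with rfl | rfl <;> simp [hi, hj]
  · intros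
    positivity

/-- The permutations whose value at `k` is the maximum over the positions up to `k`. -/
def maxAt {n : ℕ} (k : Fin n) : Finset (Equiv.Perm (Fin n)) :=
  Finset.univ.filter fun σ => ∀ i, i < k → σ i < σ k

lemma card_maxAt_mul_le {n : ℕ} (k : Fin n) : ((k : ℕ) + 1) * (maxAt k).card ≤ n.factorial := by
  have h : ((Finset.Iic k) ×ˢ maxAt k).card ≤ (univ : Finset (Equiv.Perm (Fin n))).card := by
    apply Finset.card_le_card_of_injOn (fun p => p.2 * Equiv.swap p.1 k) (fun _ _ => mem_univ _)
    rintro ⟨i, σ⟩ h1 ⟨j, τ⟩ h2 h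
    simp only [maxAt, coe_product, Set.mem_prod, mem_coe, mem_Iic, mem_filter, mem_univ,
      true_and] at h1 h2 h
    -- Every value up to position `k` is bounded by the value at `k`, also after the swap.
    have key : ∀ (ρ : Equiv.Perm (Fin n)) (l m : Fin n), l ≤ k → m ≤ k →
        (∀ i, i < k → ρ i < ρ k) → (ρ * Equiv.swap l k) m ≤ ρ k := by
      intro ρ l m hl hm hρ
      have hle : ∀ x, x ≤ k → ρ x ≤ ρ k := fun x hx => by
        rcases hx.lt_or_eq with hx | rfl
        · exact (hρ x hx).le
        · exact le_rfl
      rw [Equiv.Perm.mul_apply]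
      apply hle
      rw [Equiv.swap_apply_def]
      split_ifs <;> first | exact le_rfl | assumption
    have e1 : (σ * Equiv.swap i k) i = σ k := by simp
    have e2 : (τ * Equiv.swap j k) j = τ k := by simp
    have hv : σ k = τ k := by
      apply le_antisymm
      · rw [← e1, h]
        exact key τ j i h2.1 h1.1 h2.2
      · rw [← e2, ← h]
        exact key σ i j h1.1 h2.1 h1.2
    have hij : i = j := by
      apply (σ * Equiv.swap i k).injective
      rw [e1, h, e2, hv]
    subst hij
    simpa using h
  simpa [Finset.card_product, Fintype.card_perm] using h

/-- Recovers a permutation with `D = 0` from its modification: the sign of `D` and the value at `k`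
tell which two values were exchanged. Values are zero-based here, so `n - 1` is the largest. -/
def recover {n : ℕ} (hn : 4 ≤ n) (k : Fin n) (τ : Equiv.Perm (Fin n)) : Equiv.Perm (Fin n) :=
  if D n k 1 τ < 0 then Equiv.swap ⟨(τ k : ℕ) - 1, by omega⟩ (τ k) * τ
  else if (τ k : ℕ) = n - 2 then Equiv.swap ⟨n - 1, by omega⟩ ⟨n - 2, by omega⟩ * τ
  else Equiv.swap ⟨0, by omega⟩ ⟨n - 3, by omega⟩ * τ

lemma headSum_swap_mul {n : ℕ} {k : Fin n} {σ : Equiv.Perm (Fin n)} {x y : Fin n}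
    (hx : ∀ i, i < k → σ i ≠ x) (hy : ∀ i, i < k → σ i ≠ y) :
    headSum n k (Equiv.swap x y * σ) = headSum n k σ := by
  apply Finset.sum_congr rfl
  intro i hi
  have hi' : i < k := by simpa using hi
  rw [Equiv.Perm.mul_apply, Equiv.swap_apply_of_ne_of_ne (hx i hi') (hy i hi')]

lemma add_lt_of_D_eq_zero {n : ℕ} {k : Fin n} {σ : Equiv.Perm (Fin n)} (h : D n k 1 σ = 0)
    {i j : Fin n} (hi : i < k) (hj : j < k) (hij : i ≠ j) :
    (σ i : ℕ) + (σ j : ℕ) + 1 ≤ σ k := by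
  have h1 := pair_le_headSum σ (a := k) hi hj hij
  rw [D_one_eq] at h
  omega

lemma exists_other {n : ℕ} {k : Fin n} (hk : 1 < (k : ℕ)) (i : Fin n) : ∃ j, j < k ∧ i ≠ j := by
  by_cases h : (i : ℕ) = 0
  · exact ⟨⟨1, by omega⟩, Fin.lt_def.2 hk, fun e => by simp [e] at h⟩
  · exact ⟨⟨0, by omega⟩, Fin.lt_def.2 (by simp; omega), fun e => by simp [e] at h⟩

lemma lt_of_D_eq_zero {n : ℕ} {k : Fin n} (hk : 1 < (k : ℕ)) {σ : Equiv.Perm (Fin n)}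
    (h : D n k 1 σ = 0) {i : Fin n} (hi : i < k) : (σ i : ℕ) < σ k := by
  obtain ⟨j, hj, hij⟩ := exists_other hk i
  have := add_lt_of_D_eq_zero h hi hj hij
  omega

lemma exists_recover {n : ℕ} (hn : 4 ≤ n) {k : Fin n} (hk : 1 < (k : ℕ))
    {σ : Equiv.Perm (Fin n)} (h : D n k 1 σ = 0) :
    ∃ τ ∈ maxAt k, D n k 1 τ ≠ 0 ∧ recover hn k τ = σ := by
  have hlt : ∀ i, i < k → (σ i : ℕ) < σ k := fun i hi => lt_of_D_eq_zero hk h hi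
  have hS := D_one_eq n k σ
  by_cases hc : (σ k : ℕ) < n - 1
  · -- `c < n`: exchange `c` and `c + 1`.
    set q : Fin n := ⟨(σ k : ℕ) + 1, by omega⟩ with hq
    have hx : ∀ i, i < k → σ i ≠ σ k := fun i hi e => by have := hlt i hi; rw [e] at this; omega
    have hy : ∀ i, i < k → σ i ≠ q := fun i hi e => by
      have := hlt i hi
      simp only [e, hq] at this
      omega
    have hk' : (Equiv.swap (σ k) q * σ) k = q := by simp
    have hD : D n k 1 (Equiv.swap (σ k) q * σ) = -1 := by
      rw [D_one_eq, headSum_swap_mul hx hy, hk']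
      simp only [hq]
      push_cast
      omega
    refine ⟨Equiv.swap (σ k) q * σ, ?_, by omega, ?_⟩
    · simp only [maxAt, mem_filter, mem_univ, true_and]
      intro i hi
      rw [hk', Equiv.Perm.mul_apply, Equiv.swap_apply_of_ne_of_ne (hx i hi) (hy i hi), Fin.lt_def]
      have := hlt i hi
      simp only [hq]
      omega
    · have hp : (⟨(((Equiv.swap (σ k) q * σ) k : Fin n) : ℕ) - 1, by omega⟩ : Fin n) = σ k := by
        rw [Fin.ext_iff]
        change (((Equiv.swap (σ k) q * σ) k : Fin n) : ℕ) - 1 = σ k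
        rw [hk']
        simp only [hq]
        omega
      rw [recover, if_pos (by omega), hp, hk', ← mul_assoc, Equiv.swap_mul_self, one_mul]
  · have hc' : (σ k : ℕ) = n - 1 := by omega
    set u : Fin n := ⟨n - 1, by omega⟩ with hu
    set v : Fin n := ⟨n - 2, by omega⟩ with hv
    have hku : σ k = u := Fin.ext hc'
    by_cases hA : ∃ i, i < k ∧ σ i = v
    · -- The first `k` values are `1` and `n - 1`: exchange `1` and `n - 2`.
      obtain ⟨i, hi, hiv⟩ := hA
      obtain ⟨j, hj, hij⟩ := exists_other hk i
      set z : Fin n := ⟨0, by omega⟩ with hz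
      set w : Fin n := ⟨n - 3, by omega⟩ with hw
      have hjz : σ j = z := by
        have := add_lt_of_D_eq_zero h hi hj hij
        rw [hiv] at this
        rw [Fin.ext_iff]
        simp only [hv, hz] at this ⊢
        omega
      have hk' : (Equiv.swap z w * σ) k = u := by
        rw [Equiv.Perm.mul_apply, hku]
        apply Equiv.swap_apply_of_ne_of_ne <;> simp only [hu, hz, hw, ne_eq, Fin.ext_iff] <;> omega
      have hi' : (Equiv.swap z w * σ) i = v := by
        rw [Equiv.Perm.mul_apply, hiv]
        apply Equiv.swap_apply_of_ne_of_ne <;> simp only [hv, hz, hw, ne_eq, Fin.ext_iff] <;> omega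
      have hj' : (Equiv.swap z w * σ) j = w := by
        rw [Equiv.Perm.mul_apply, hjz, Equiv.swap_apply_left]
      have hD : 0 < D n k 1 (Equiv.swap z w * σ) := by
        have h1 := pair_le_headSum (Equiv.swap z w * σ) (a := k) hi hj hij
        rw [hi', hj'] at h1
        rw [D_one_eq, hk']
        simp only [hu, hv, hw] at h1 ⊢
        omega
      refine ⟨Equiv.swap z w * σ, ?_, by omega, ?_⟩
      · simp only [maxAt, mem_filter, mem_univ, true_and]
        intro l hl
        have hne : (Equiv.swap z w * σ) l ≠ (Equiv.swap z w * σ) k :=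
          fun e => hl.ne ((Equiv.swap z w * σ).injective e)
        rw [hk'] at hne ⊢
        rw [ne_eq, Fin.ext_iff] at hne
        rw [Fin.lt_def]
        simp only [hu] at hne ⊢
        omega
      · rw [recover, if_neg (by omega), if_neg (by rw [hk']; simp only [hu]; omega), ← mul_assoc,
          Equiv.swap_mul_self, one_mul]
    · -- `n - 1` is free: exchange it with `n`.
      push Not at hA
      have hx : ∀ i, i < k → σ i ≠ u := fun i hi e => by
        have := hlt i hi
        rw [e, hku] at this
        omega
      have hk' : (Equiv.swap u v * σ) k = v := by
        rw [Equiv.Perm.mul_apply, hku, Equiv.swap_apply_left]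
      have hD : D n k 1 (Equiv.swap u v * σ) = 1 := by
        rw [D_one_eq, headSum_swap_mul hx hA, hk']
        simp only [hv]
        omega
      refine ⟨Equiv.swap u v * σ, ?_, by omega, ?_⟩
      · simp only [maxAt, mem_filter, mem_univ, true_and]
        intro i hi
        have h1 := hlt i hi
        have h2 := hA i hi
        rw [hk', Equiv.Perm.mul_apply, Equiv.swap_apply_of_ne_of_ne (hx i hi) h2, Fin.lt_def]
        rw [ne_eq, Fin.ext_iff] at h2
        simp only [hv] at h2 ⊢
        omega
      · rw [recover, if_neg (by omega), if_pos (by rw [hk']), ← mul_assoc,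
          Equiv.swap_mul_self, one_mul]

lemma two_mul_card_le {n : ℕ} (hn : 4 ≤ n) {k : Fin n} (hk : 1 < (k : ℕ)) :
    2 * (univ.filter fun σ : Equiv.Perm (Fin n) => D n k 1 σ = 0).card ≤ (maxAt k).card := by
  have hsub : (maxAt k).filter (fun σ => D n k 1 σ = 0)
      = univ.filter fun σ : Equiv.Perm (Fin n) => D n k 1 σ = 0 := by
    ext σ
    simp only [maxAt, mem_filter, mem_univ, true_and, and_iff_right_iff_imp]
    exact fun h i hi => lt_of_D_eq_zero hk h hi
  have hle : (univ.filter fun σ : Equiv.Perm (Fin n) => D n k 1 σ = 0).card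
      ≤ ((maxAt k).filter (fun σ => ¬ D n k 1 σ = 0)).card := by
    apply Finset.card_le_card_of_surjOn (recover hn k)
    intro σ hσ
    obtain ⟨τ, h1, h2, h3⟩ := exists_recover hn hk (by simpa using hσ)
    exact ⟨τ, by simp [h1, h2], h3⟩
  have := Finset.card_filter_add_card_filter_not (s := maxAt k) (fun σ => D n k 1 σ = 0)
  rw [hsub] at this
  omega

/-- For `1 < a < n − 1`, a uniformly random permutation `σ` of `{1,…,n}` satisfies
`D_{a,1}(σ) = 0` with probability at most `n/(2(n−1)(a+1))`. -/
theorem prob_D_b_one (a n : ℕ) (ha : 1 < a) (han : a < n - 1) :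
    ((Finset.univ.filter
        (fun σ : Equiv.Perm (Fin n) => D n a 1 σ = 0)).card : ℚ)
      / (Nat.factorial n : ℚ)
      ≤ (n : ℚ) / (2 * ((n : ℚ) - 1) * ((a : ℚ) + 1)) := by
  have h1 := two_mul_card_le (n := n) (by omega) (k := ⟨a, by omega⟩) ha
  have h2 := card_maxAt_mul_le (n := n) ⟨a, by omega⟩
  simp only at h1 h2
  set N := (Finset.univ.filter (fun σ : Equiv.Perm (Fin n) => D n a 1 σ = 0)).card
  have h3 : (a + 1) * (2 * N) ≤ n.factorial := (Nat.mul_le_mul_left _ h1).trans h2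
  have h4 : ((a : ℚ) + 1) * (2 * N) ≤ n.factorial := by exact_mod_cast h3
  have hn : (4 : ℚ) ≤ n := by exact_mod_cast (by omega : 4 ≤ n)
  have hf : (0 : ℚ) < n.factorial := by exact_mod_cast n.factorial_pos
  have hpos : (0 : ℚ) < 2 * ((n : ℚ) - 1) * ((a : ℚ) + 1) :=
    mul_pos (by linarith) (by positivity)
  rw [div_le_div_iff₀ hf hpos]
  calc (N : ℚ) * (2 * ((n : ℚ) - 1) * ((a : ℚ) + 1))
      = ((n : ℚ) - 1) * (((a : ℚ) + 1) * (2 * N)) := by ring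
    _ ≤ ((n : ℚ) - 1) * n.factorial := mul_le_mul_of_nonneg_left h4 (by linarith)
    _ ≤ n * n.factorial := mul_le_mul_of_nonneg_right (by linarith) hf.le
end
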